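/- arXiv:2209.02171 — 6 statements merged into one kernel-verified Lean document; each statement's English description precedes it below -/
import Mathlib

section
/- Let Φ be an irreducible (finite, reduced, crystallographic) root system of rank r in a finite-dimensional real vector space, and let Ψ be a proper root subsystem of Φ (a subset Ψ ⊊ Φ stable under the reflections s_β for all β ∈ Ψ). Then |Φ| − |Ψ| ≥ 2r; equivalently, Φ \ Ψ contains at least 2r roots. -/
open scoped RealInnerProductSpace

/-- If `Φ` is an irreducible (finite, reduced, crystallographic) root system of rank `r`
in a finite-dimensional real inner product space and `Ψ ⊊ Φ` is a proper root subsystem,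
then `|Φ| - |Ψ| ≥ 2r`. -/
theorem card_sub_card_subsystem_ge_two_mul_rank
    {V : Type*} [NormedAddCommGroup V] [DecidableEq V] [InnerProductSpace ℝ V] [FiniteDimensional ℝ V]
    (Φ : Finset V)
    (hzero : (0 : V) ∉ Φ)
    (hrefl : ∀ α ∈ Φ, ∀ β ∈ Φ, β - (2 * ⟪β, α⟫ / ⟪α, α⟫) • α ∈ Φ)
    (hcrys : ∀ α ∈ Φ, ∀ β ∈ Φ, ∃ n : ℤ, 2 * ⟪β, α⟫ / ⟪α, α⟫ = (n : ℝ))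
    (hred : ∀ α ∈ Φ, ∀ c : ℝ, c • α ∈ Φ → c = 1 ∨ c = -1)
    (hirr : ∀ S₁ S₂ : Finset V, Disjoint S₁ S₂ → Φ = S₁ ∪ S₂ →
      (∀ α ∈ S₁, ∀ β ∈ S₂, ⟪α, β⟫ = 0) → S₁ = ∅ ∨ S₂ = ∅)
    (Ψ : Finset V) (hΨΦ : Ψ ⊆ Φ) (hproper : Ψ ≠ Φ)
    (hΨrefl : ∀ β ∈ Ψ, ∀ γ ∈ Ψ, γ - (2 * ⟪γ, β⟫ / ⟪β, β⟫) • β ∈ Ψ) :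
    Ψ.card + 2 * Module.finrank ℝ (Submodule.span ℝ (Φ : Set V)) ≤ Φ.card := by
  classical
  have hne : ∀ α ∈ Φ, ⟪α, α⟫ ≠ 0 := fun α hα h => hzero (inner_self_eq_zero.mp h ▸ hα)
  have hneg : ∀ S : Finset V, S ⊆ Φ →
      (∀ β ∈ S, ∀ γ ∈ S, γ - (2 * ⟪γ, β⟫ / ⟪β, β⟫) • β ∈ S) → ∀ β ∈ S, -β ∈ S := by
    intro S hS h β hβ
    have h1 := h β hβ β hβ
    have h2 : (2 * ⟪β, β⟫ / ⟪β, β⟫) = 2 := by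
      have := hne β (hS hβ)
      field_simp
    rw [h2] at h1
    have h3 : β - (2 : ℝ) • β = -β := by module
    rwa [h3] at h1
  have hnegΦ := hneg Φ (Finset.Subset.refl _) hrefl
  have hnegΨ := hneg Ψ hΨΦ hΨrefl
  -- the reflections in `Ψ` preserve the complement of `Ψ`
  have hstab : ∀ β ∈ Ψ, ∀ γ ∈ Φ \ Ψ, γ - (2 * ⟪γ, β⟫ / ⟪β, β⟫) • β ∈ Φ \ Ψ := by
    intro β hβ γ hγ
    rw [Finset.mem_sdiff] at hγ ⊢
    refine ⟨hrefl β (hΨΦ hβ) γ hγ.1, fun hmem => hγ.2 ?_⟩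
    have h1 := hΨrefl β hβ _ hmem
    have h0 := hne β (hΨΦ hβ)
    have h2 : 2 * ⟪γ - (2 * ⟪γ, β⟫ / ⟪β, β⟫) • β, β⟫ / ⟪β, β⟫ = -(2 * ⟪γ, β⟫ / ⟪β, β⟫) := by
      rw [inner_sub_left, real_inner_smul_left]
      field_simp
      ring
    rw [h2] at h1
    simpa using h1
  set U := Submodule.span ℝ ((Φ \ Ψ : Finset V) : Set V) with hU
  have hsub : ∀ γ ∈ Φ \ Ψ, γ ∈ U := fun γ hγ => Submodule.subset_span (by exact_mod_cast hγ)
  -- each root outside `U` is orthogonal to `U`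
  have horth : ∀ β ∈ Φ, β ∉ U → ∀ u ∈ U, ⟪u, β⟫ = 0 := by
    intro β hβ hβU
    have hβΨ : β ∈ Ψ := by
      by_contra h
      exact hβU (hsub β (Finset.mem_sdiff.mpr ⟨hβ, h⟩))
    intro u hu
    induction hu using Submodule.span_induction with
    | mem γ hγ =>
      have hγ' : γ ∈ Φ \ Ψ := by exact_mod_cast hγ
      by_contra h
      apply hβU
      have h1 := U.sub_mem (hsub _ hγ') (hsub _ (hstab β hβΨ γ hγ'))
      rw [sub_sub_cancel] at h1
      refine (U.smul_mem_iff ?_).mp h1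
      exact div_ne_zero (mul_ne_zero two_ne_zero h) (hne β hβ)
    | zero => simp
    | add x y _ _ hx hy => rw [inner_add_left, hx, hy, add_zero]
    | smul a x _ hx => rw [real_inner_smul_left, hx, mul_zero]
  obtain ⟨γ, hγΦ, hγΨ⟩ : ∃ γ ∈ Φ, γ ∉ Ψ := by
    by_contra! h
    exact hproper (Finset.Subset.antisymm hΨΦ h)
  have hΦU : ∀ α ∈ Φ, α ∈ U := by
    rcases hirr (Φ.filter (· ∈ U)) (Φ.filter (· ∉ U))
      (Finset.disjoint_filter_filter_not _ _ _) (Finset.filter_union_filter_not_eq _ _).symm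
      (fun α hα β hβ => horth β (Finset.mem_filter.mp hβ).1 (Finset.mem_filter.mp hβ).2 α
        (Finset.mem_filter.mp hα).2) with h | h
    · exact absurd (hsub γ (Finset.mem_sdiff.mpr ⟨hγΦ, hγΨ⟩)) (Finset.filter_eq_empty_iff.mp h hγΦ)
    · intro α hα
      by_contra h'
      exact Finset.filter_eq_empty_iff.mp h hα h'
  have hspan : Submodule.span ℝ (Φ : Set V) = U := by
    apply le_antisymm
    · exact Submodule.span_le.mpr fun α hα => hΦU α (by exact_mod_cast hα)
    · exact Submodule.span_mono (by exact_mod_cast Finset.sdiff_subset)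
  obtain ⟨b, hb, hbspan, hbli⟩ := exists_linearIndependent ℝ ((Φ \ Ψ : Finset V) : Set V)
  lift b to Finset V using (Finset.finite_toSet _).subset hb
  have hbsub : b ⊆ Φ \ Ψ := by exact_mod_cast hb
  have hrank : Module.finrank ℝ U = b.card := by
    rw [hU, ← hbspan]
    exact finrank_span_finset_eq_card hbli
  -- `b` and `-b` are disjoint subsets of the complement
  have hdisj : Disjoint b (b.image (fun x => -x)) := by
    rw [Finset.disjoint_left]
    intro x hx hx'
    obtain ⟨y, hy, hyx⟩ := Finset.mem_image.mp hx'
    have hx0 : x ≠ 0 := fun h => hzero (h ▸ (Finset.mem_sdiff.mp (hbsub hx)).1)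
    by_cases hxy : x = y
    · subst hxy
      have h2 : (2 : ℝ) • x = 0 := by
        rw [two_smul]
        nth_rewrite 1 [← hyx]
        exact neg_add_cancel x
      exact hx0 ((smul_eq_zero_iff_right two_ne_zero).mp h2)
    · have hp : LinearIndepOn ℝ id (({x, y} : Set V)) := by
        refine LinearIndepOn.mono hbli ?_
        rintro z (rfl | rfl)
        · exact_mod_cast hx
        · exact_mod_cast hy
      rw [LinearIndepOn.pair_iff _ hxy] at hp
      have := hp 1 1 (by simp [← hyx])
      simp at this
  have hsub2 : b ∪ b.image (fun x => -x) ⊆ Φ \ Ψ := by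
    refine Finset.union_subset hbsub fun x hx => ?_
    obtain ⟨y, hy, rfl⟩ := Finset.mem_image.mp hx
    have := Finset.mem_sdiff.mp (hbsub hy)
    refine Finset.mem_sdiff.mpr ⟨hnegΦ y this.1, fun h => this.2 ?_⟩
    simpa using hnegΨ _ h
  have hcard := Finset.card_le_card hsub2
  rw [Finset.card_union_of_disjoint hdisj, Finset.card_image_of_injective _ neg_injective,
    Finset.card_sdiff_of_subset hΨΦ] at hcard
  have := Finset.card_le_card hΨΦ
  rw [hspan, hrank]
  omega
end

section
/- Let F be a finite field with q elements of odd characteristic and let a, b, c, d ∈ Fˣ satisfy a ≠ b, c ≠ d, abcd = 1, and ac ≠ 1, ad ≠ 1, bc ≠ 1, bd ≠ 1. Let C₁, C₂ be the conjugacy classes of diag(a,b) and diag(c,d) in GL₂(F), and let C₃ be the regular unipotent conjugacy class of GL₂(F). Then the number of triples (S₁, S₂, S₃) ∈ C₁ × C₂ × C₃ with S₁S₂S₃ = 1 equals q³ − q; that is, such triples form a single orbit under simultaneous conjugation by GL₂(F), with trivial projective stabilizers. -/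
open Matrix in
theorem aux_isConj {F : Type*} [Field F] (A B P : Matrix (Fin 2) (Fin 2) F)
    (hP : P.det ≠ 0) (h : P * A = B * P) : IsConj A B := by
  have hu : IsUnit P := (Matrix.isUnit_iff_isUnit_det P).2 (isUnit_iff_ne_zero.2 hP)
  obtain ⟨u, rfl⟩ := hu
  exact ⟨u, h⟩

theorem aux_k {F : Type*} [Field F] (a b c d x k w : F) (hab : a ≠ b)
    (habcd : a * b * c * d = 1)
    (hac : a * c ≠ 1) (had : a * d ≠ 1) (hbc : b * c ≠ 1) (hbd : b * d ≠ 1)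
    (h1 : x + w = c + d) (h2 : a * x + b * w = 2) (h3 : x * w - k = c * d) : k ≠ 0 := by
  intro hk
  have e1 : (a - b) * x = 2 - b * (c + d) := by linear_combination h2 - b * h1
  have e2 : (a - b) * w = a * (c + d) - 2 := by linear_combination a * h1 - h2
  have e3 : ((a - b) * x) * ((a - b) * w) = (a - b) ^ 2 * (c * d) := by
    rw [← h3, hk]; ring
  rw [e1, e2] at e3
  have : (a * c - 1) * (a * d - 1) * ((b * c - 1) * (b * d - 1)) = 0 := by
    linear_combination (-1 : F) * e3 + (a*b*c*d - 1 - (a + b) * (c + d) + 4) * habcd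
  simp [sub_eq_zero, hac, had, hbc, hbd] at this

theorem aux_stab {F : Type*} [Field F] [Fintype F] (a b x k w : F) (hab : a ≠ b) :
    Nat.card (MulAction.stabilizer (ConjAct (Matrix (Fin 2) (Fin 2) F)ˣ)
      ((Matrix.diagonal ![a, b], !![x, 1; k, w]) :
        Matrix (Fin 2) (Fin 2) F × Matrix (Fin 2) (Fin 2) F)) = Nat.card Fˣ := by
  symm
  have key : ∀ g : ConjAct (Matrix (Fin 2) (Fin 2) F)ˣ, g ∈ MulAction.stabilizer
      (ConjAct (Matrix (Fin 2) (Fin 2) F)ˣ)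
      ((Matrix.diagonal ![a, b], !![x, 1; k, w]) :
        Matrix (Fin 2) (Fin 2) F × Matrix (Fin 2) (Fin 2) F) ↔
      ((ConjAct.ofConjAct g : (Matrix (Fin 2) (Fin 2) F)ˣ) : Matrix (Fin 2) (Fin 2) F) * Matrix.diagonal ![a, b] =
        Matrix.diagonal ![a, b] * ((ConjAct.ofConjAct g : (Matrix (Fin 2) (Fin 2) F)ˣ) : Matrix (Fin 2) (Fin 2) F) ∧
      ((ConjAct.ofConjAct g : (Matrix (Fin 2) (Fin 2) F)ˣ) : Matrix (Fin 2) (Fin 2) F) * !![x, 1; k, w] =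
        !![x, 1; k, w] * ((ConjAct.ofConjAct g : (Matrix (Fin 2) (Fin 2) F)ˣ) : Matrix (Fin 2) (Fin 2) F) := by
    intro g
    rw [MulAction.mem_stabilizer_iff, Prod.smul_mk, Prod.mk.injEq, ConjAct.units_smul_def,
      ConjAct.units_smul_def, Units.mul_inv_eq_iff_eq_mul, Units.mul_inv_eq_iff_eq_mul]
  refine Nat.card_eq_of_bijective (fun t : Fˣ => ⟨ConjAct.toConjAct
    (Units.map (algebraMap F (Matrix (Fin 2) (Fin 2) F)).toMonoidHom t), ?_⟩) ⟨?_, ?_⟩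
  · rw [key]
    simp only [ConjAct.ofConjAct_toConjAct]
    exact ⟨Algebra.commutes _ _, Algebra.commutes _ _⟩
  · intro s t h
    have h2 := congrArg (fun z => ((ConjAct.ofConjAct z.1 : (Matrix (Fin 2) (Fin 2) F)ˣ) :
      Matrix (Fin 2) (Fin 2) F) 0 0) h
    ext
    simpa [Matrix.algebraMap_matrix_apply] using h2
  · rintro ⟨g, hg⟩
    obtain ⟨h1, h2⟩ := (key g).1 hg
    set u := ConjAct.ofConjAct g with hu
    have h01 := congrFun (congrFun h1 0) 1
    have h10 := congrFun (congrFun h1 1) 0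
    have h01' := congrFun (congrFun h2 0) 1
    simp [Matrix.mul_apply, Fin.sum_univ_two] at h01 h10 h01'
    have hab' : a - b ≠ 0 := sub_ne_zero.2 hab
    have z01 : (u : Matrix (Fin 2) (Fin 2) F) 0 1 = 0 := by
      apply (mul_eq_zero.1 (_ : (a - b) * _ = 0)).resolve_left hab'
      linear_combination -h01
    have z10 : (u : Matrix (Fin 2) (Fin 2) F) 1 0 = 0 := by
      apply (mul_eq_zero.1 (_ : (a - b) * _ = 0)).resolve_left hab'
      linear_combination h10
    have e : (u : Matrix (Fin 2) (Fin 2) F) 1 1 = (u : Matrix (Fin 2) (Fin 2) F) 0 0 := by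
      rw [z01] at h01'
      linear_combination -h01'
    have hdet : (u : Matrix (Fin 2) (Fin 2) F).det ≠ 0 :=
      ((Matrix.isUnit_iff_isUnit_det _).1 u.isUnit).ne_zero
    rw [Matrix.det_fin_two, z01] at hdet
    have h00 : (u : Matrix (Fin 2) (Fin 2) F) 0 0 ≠ 0 := by
      intro h; simp [h] at hdet
    refine ⟨Units.mk0 _ h00, ?_⟩
    apply Subtype.ext
    apply ConjAct.ofConjAct.injective
    apply Units.ext
    change _ = (u : Matrix (Fin 2) (Fin 2) F)
    ext i j
    fin_cases i <;> fin_cases j <;> simp [Matrix.algebraMap_matrix_apply, z01, z10, e]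

theorem aux_orbit {F : Type*} [Field F]
    (a b c d x k w : F) (hb0 : b ≠ 0)
    (hab : a ≠ b) (hcd : c ≠ d) (habcd : a * b * c * d = 1)
    (h1 : x + w = c + d) (h2 : a * x + b * w = 2) (h3 : x * w - k = c * d) (hk : k ≠ 0) :
    Nat.card {x : Matrix (Fin 2) (Fin 2) F × Matrix (Fin 2) (Fin 2) F ×
        Matrix (Fin 2) (Fin 2) F //
        IsConj (Matrix.diagonal ![a, b]) x.1 ∧
        IsConj (Matrix.diagonal ![c, d]) x.2.1 ∧
        IsConj (!![1, 1; 0, 1] : Matrix (Fin 2) (Fin 2) F) x.2.2 ∧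
        x.1 * x.2.1 * x.2.2 = 1} =
    Nat.card (MulAction.orbit (ConjAct (Matrix (Fin 2) (Fin 2) F)ˣ)
      ((Matrix.diagonal ![a, b], !![x, 1; k, w]) :
        Matrix (Fin 2) (Fin 2) F × Matrix (Fin 2) (Fin 2) F)) := by
  have tr : ∀ (g : (Matrix (Fin 2) (Fin 2) F)ˣ) (A : Matrix (Fin 2) (Fin 2) F),
      ((g : Matrix (Fin 2) (Fin 2) F) * A * (↑g⁻¹ : Matrix (Fin 2) (Fin 2) F)).trace
        = A.trace := by
    intro g A
    rw [Matrix.trace_mul_cycle, Units.inv_mul, one_mul]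
  have conjdef : ∀ A B : Matrix (Fin 2) (Fin 2) F, IsConj A B → ∃ g : (Matrix (Fin 2) (Fin 2) F)ˣ,
      B = (g : Matrix (Fin 2) (Fin 2) F) * A * (↑g⁻¹ : Matrix (Fin 2) (Fin 2) F) := by
    rintro A B ⟨g, hg⟩
    exact ⟨g, (Units.eq_mul_inv_iff_mul_eq g).2 hg.symm⟩
  have conjto : ∀ (A : Matrix (Fin 2) (Fin 2) F) (g : (Matrix (Fin 2) (Fin 2) F)ˣ),
      IsConj A ((g : Matrix (Fin 2) (Fin 2) F) * A * (↑g⁻¹ : Matrix (Fin 2) (Fin 2) F)) := by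
    intro A g
    refine ⟨g, ?_⟩
    simp [SemiconjBy, mul_assoc]
  refine Nat.card_eq_of_bijective (fun t => ⟨(t.1.1, t.1.2.1), ?_⟩) ⟨?_, ?_⟩
  · obtain ⟨⟨x1, x2, x3⟩, c1, c2, c3, e⟩ := t
    dsimp only at c1 c2 c3 e ⊢
    obtain ⟨g, rfl⟩ := conjdef _ _ c1
    obtain ⟨p, hp⟩ := conjdef _ _ c2
    obtain ⟨r, rfl⟩ := conjdef _ _ c3
    obtain ⟨S, rfl⟩ : ∃ S, x2 = (g : Matrix (Fin 2) (Fin 2) F) * S *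
        (↑g⁻¹ : Matrix (Fin 2) (Fin 2) F) :=
      ⟨(↑g⁻¹ : Matrix (Fin 2) (Fin 2) F) * x2 * g, by simp [mul_assoc]⟩
    have t1 : S.trace = c + d := by
      have := congrArg Matrix.trace hp
      rw [tr, tr] at this
      simpa [Matrix.trace_fin_two] using this
    have t2 : S.det = c * d := by
      have := congrArg Matrix.det hp
      rw [Matrix.det_units_conj, Matrix.det_units_conj] at this
      simpa using this
    have t3 : (Matrix.diagonal ![a, b] * S).trace = 2 := by
      have e1 : (g : Matrix (Fin 2) (Fin 2) F) * Matrix.diagonal ![a, b] *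
          (↑g⁻¹ : Matrix (Fin 2) (Fin 2) F) * ((g : Matrix (Fin 2) (Fin 2) F) * S *
          (↑g⁻¹ : Matrix (Fin 2) (Fin 2) F)) = (g : Matrix (Fin 2) (Fin 2) F) *
          (Matrix.diagonal ![a, b] * S) * (↑g⁻¹ : Matrix (Fin 2) (Fin 2) F) := by
        simp [mul_assoc]
      have e2 : ((r : Matrix (Fin 2) (Fin 2) F) * !![1, 1; 0, 1] *
          (↑r⁻¹ : Matrix (Fin 2) (Fin 2) F)) * ((r : Matrix (Fin 2) (Fin 2) F) * !![1, -1; 0, 1] *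
          (↑r⁻¹ : Matrix (Fin 2) (Fin 2) F)) = 1 := by
        have : (!![1, 1; 0, 1] * !![1, -1; 0, 1] : Matrix (Fin 2) (Fin 2) F) = 1 := by
          ext i j; fin_cases i <;> fin_cases j <;> simp
        calc _ = (r : Matrix (Fin 2) (Fin 2) F) * (!![1, 1; 0, 1] * !![1, -1; 0, 1]) *
          (↑r⁻¹ : Matrix (Fin 2) (Fin 2) F) := by simp only [mul_assoc, Units.inv_mul_cancel_left]
          _ = 1 := by rw [this]; simp
      have e3 := left_inv_eq_right_inv e e2
      rw [e1] at e3
      have := congrArg Matrix.trace e3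
      rw [tr, tr] at this
      rw [this]
      simp [Matrix.trace_fin_two]; norm_num
    rw [Matrix.trace_fin_two] at t1
    rw [Matrix.det_fin_two] at t2
    simp [Matrix.trace_fin_two] at t3
    have hab' : a - b ≠ 0 := sub_ne_zero.2 hab
    have s00 : S 0 0 = x := by
      apply mul_left_cancel₀ hab'
      linear_combination t3 - h2 - b * t1 + b * h1
    have s11 : S 1 1 = w := by linear_combination t1 - h1 - s00
    rw [s00, s11] at t2
    have hyz : S 0 1 * S 1 0 = k := by linear_combination h3 - t2
    have hy : S 0 1 ≠ 0 := by
      intro h; rw [h, zero_mul] at hyz; exact hk hyz.symm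
    have hPu : IsUnit (Matrix.diagonal ![S 0 1, 1] : Matrix (Fin 2) (Fin 2) F) := by
      rw [Matrix.isUnit_iff_isUnit_det]
      simpa using hy
    obtain ⟨P, hP⟩ := hPu
    have hS : S = (P : Matrix (Fin 2) (Fin 2) F) * !![x, 1; k, w] *
        (↑P⁻¹ : Matrix (Fin 2) (Fin 2) F) := by
      rw [Units.eq_mul_inv_iff_mul_eq, hP]
      ext i j
      fin_cases i <;> fin_cases j <;> simp [s00, s11, Matrix.mul_apply, Fin.sum_univ_two, mul_comm]
      rw [← hyz]
    have hD : Matrix.diagonal ![a, b] = (P : Matrix (Fin 2) (Fin 2) F) * Matrix.diagonal ![a, b] *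
        (↑P⁻¹ : Matrix (Fin 2) (Fin 2) F) := by
      rw [Units.eq_mul_inv_iff_mul_eq, hP]
      exact (Matrix.commute_diagonal _ _).eq
    refine ⟨ConjAct.toConjAct (g * P), ?_⟩
    simp only [Prod.smul_mk, ConjAct.units_smul_def, ConjAct.ofConjAct_toConjAct]
    rw [Prod.mk.injEq]
    constructor
    · conv_rhs => rw [hD]
      simp [mul_assoc]
    · conv_rhs => rw [hS]
      simp [mul_assoc]
  · rintro ⟨⟨x1, x2, x3⟩, c1, c2, c3, e⟩ ⟨⟨y1, y2, y3⟩, c1', c2', c3', e'⟩ h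
    simp only [Subtype.mk.injEq, Prod.mk.injEq] at h
    obtain ⟨rfl, rfl⟩ := h
    have e2 := mul_eq_one_comm.1 e
    have : x3 = y3 := left_inv_eq_right_inv e2 e'
    subst this
    rfl
  · rintro ⟨_, ⟨g, rfl⟩⟩
    set u := ConjAct.ofConjAct g with hu
    have q2 : IsConj (Matrix.diagonal ![c, d]) (!![x, 1; k, w] : Matrix (Fin 2) (Fin 2) F) := by
      apply aux_isConj _ _ !![1, 1; c - x, d - x]
      · rw [Matrix.det_fin_two_of]
        intro h
        apply hcd
        linear_combination -h
      · ext i j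
        fin_cases i <;> fin_cases j <;> simp [Matrix.mul_apply, Fin.sum_univ_two]
        · linear_combination h3 - c * h1
        · linear_combination h3 - d * h1
    have q3 : IsConj (!![1, 1; 0, 1] : Matrix (Fin 2) (Fin 2) F) !![b * w, -a; -(b * k), a * x] := by
      apply aux_isConj _ _ !![b * w - 1, 1; -(b * k), 0]
      · rw [Matrix.det_fin_two_of]
        simpa using ⟨hb0, hk⟩
      · ext i j
        fin_cases i <;> fin_cases j <;> simp [Matrix.mul_apply, Fin.sum_univ_two]
        · linear_combination a * b * h3 + habcd - b * w * h2
        · linear_combination b * k * h2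
    have q4 : Matrix.diagonal ![a, b] * !![x, 1; k, w] * !![b * w, -a; -(b * k), a * x] =
        (1 : Matrix (Fin 2) (Fin 2) F) := by
      ext i j
      fin_cases i <;> fin_cases j <;> simp [Matrix.mul_apply, Fin.sum_univ_two]
      · linear_combination a * b * h3 + habcd
      · ring
      · ring
      · linear_combination a * b * h3 + habcd
    refine ⟨⟨((u : Matrix (Fin 2) (Fin 2) F) * Matrix.diagonal ![a, b] *
        (↑u⁻¹ : Matrix (Fin 2) (Fin 2) F), (u : Matrix (Fin 2) (Fin 2) F) * !![x, 1; k, w] *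
        (↑u⁻¹ : Matrix (Fin 2) (Fin 2) F), (u : Matrix (Fin 2) (Fin 2) F) *
        !![b * w, -a; -(b * k), a * x] * (↑u⁻¹ : Matrix (Fin 2) (Fin 2) F)),
        conjto _ u, q2.trans (conjto _ u), q3.trans (conjto _ u), ?_⟩, ?_⟩
    · calc _ = (u : Matrix (Fin 2) (Fin 2) F) * (Matrix.diagonal ![a, b] * !![x, 1; k, w] *
          !![b * w, -a; -(b * k), a * x]) * (↑u⁻¹ : Matrix (Fin 2) (Fin 2) F) := by
            simp only [mul_assoc, Units.inv_mul_cancel_left]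
        _ = 1 := by rw [q4]; simp
    · rfl


/-- Genus 0, three punctures, `GL₂`, generic case: with `C₁, C₂` the classes of `diag(a,b)`,
`diag(c,d)` (with `abcd = 1` and `ac, ad, bc, bd ≠ 1`) and `C₃` the regular unipotent class,
the number of triples `(S₁,S₂,S₃) ∈ C₁ × C₂ × C₃` with `S₁S₂S₃ = 1` is `q³ - q`. -/
theorem GL2_triple_count_generic
    {F : Type*} [Field F] [Fintype F] (hchar : ringChar F ≠ 2)
    (q : ℕ) (hq : q = Fintype.card F)
    (a b c d : F) (ha0 : a ≠ 0) (hb0 : b ≠ 0) (hc0 : c ≠ 0) (hd0 : d ≠ 0)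
    (hab : a ≠ b) (hcd : c ≠ d) (habcd : a * b * c * d = 1)
    (hac : a * c ≠ 1) (had : a * d ≠ 1) (hbc : b * c ≠ 1) (hbd : b * d ≠ 1) :
    (Nat.card {x : Matrix (Fin 2) (Fin 2) F × Matrix (Fin 2) (Fin 2) F ×
        Matrix (Fin 2) (Fin 2) F //
        IsConj (Matrix.diagonal ![a, b]) x.1 ∧
        IsConj (Matrix.diagonal ![c, d]) x.2.1 ∧
        IsConj (!![1, 1; 0, 1] : Matrix (Fin 2) (Fin 2) F) x.2.2 ∧
        x.1 * x.2.1 * x.2.2 = 1} : ℤ) = (q : ℤ) ^ 3 - q := by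
  have hab' : a - b ≠ 0 := sub_ne_zero.2 hab
  obtain ⟨x, hx⟩ : ∃ x, x = (2 - b * (c + d)) / (a - b) := ⟨_, rfl⟩
  obtain ⟨w, hw⟩ : ∃ w, w = c + d - x := ⟨_, rfl⟩
  obtain ⟨k, hk'⟩ : ∃ k, k = x * w - c * d := ⟨_, rfl⟩
  have h1 : x + w = c + d := by rw [hw]; ring
  have h2 : a * x + b * w = 2 := by
    rw [eq_div_iff hab'] at hx
    rw [hw]; linear_combination hx
  have h3 : x * w - k = c * d := by rw [hk']; ring
  have hk := aux_k a b c d x k w hab habcd hac had hbc hbd h1 h2 h3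
  rw [aux_orbit a b c d x k w hb0 hab hcd habcd h1 h2 h3 hk]
  have hs := aux_stab a b x k w hab
  have horb := Nat.card_congr (MulAction.orbitProdStabilizerEquivGroup
    (ConjAct (Matrix (Fin 2) (Fin 2) F)ˣ) ((Matrix.diagonal ![a, b], !![x, 1; k, w]) :
        Matrix (Fin 2) (Fin 2) F × Matrix (Fin 2) (Fin 2) F))
  have hG : Nat.card (ConjAct (Matrix (Fin 2) (Fin 2) F)ˣ) = (q ^ 2 - 1) * (q ^ 2 - q) := by
    have := Matrix.card_GL_field (𝔽 := F) 2
    rw [Fin.prod_univ_two, ← hq] at this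
    have h2 : Nat.card (GL (Fin 2) F) = (q ^ 2 - 1) * (q ^ 2 - q) := by simpa using this
    exact h2
  have hU : Nat.card Fˣ = q - 1 := by
    classical
    rw [Nat.card_eq_fintype_card, Fintype.card_units, hq]
  rw [Nat.card_prod, hs, hG, hU] at horb
  have hq1 : 1 < q := by rw [hq]; exact Fintype.one_lt_card
  have hz := congrArg (Nat.cast : ℕ → ℤ) horb
  have l1 : 1 ≤ q ^ 2 := Nat.one_le_pow _ _ (by omega)
  have l2 : q ≤ q ^ 2 := by nlinarith
  rw [Nat.cast_mul, Nat.cast_mul, Nat.cast_sub hq1.le, Nat.cast_sub l1, Nat.cast_sub l2] at hz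
  push_cast at hz
  have hne : (q : ℤ) - 1 ≠ 0 := by omega
  apply mul_right_cancel₀ hne
  rw [hz]; ring
end

section
/- Let F be a finite field with q elements of odd characteristic and let a, b, c, d ∈ Fˣ satisfy a ≠ b, c ≠ d, abcd = 1, and 1 ∈ {ac, ad, bc, bd}. Let C₁, C₂ be the conjugacy classes of diag(a,b) and diag(c,d) in GL₂(F), and let C₃ be the regular unipotent conjugacy class of GL₂(F). Then the number of triples (S₁, S₂, S₃) ∈ C₁ × C₂ × C₃ with S₁S₂S₃ = 1 equals 2(q³ − q); that is, such triples form exactly two orbits under simultaneous conjugation by GL₂(F). -/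
open Matrix in
lemma isConj_of_mul_eq' {F : Type*} [Field F] (P D M : Matrix (Fin 2) (Fin 2) F)
    (hP : P.det ≠ 0) (h : P * D = M * P) : IsConj D M := by
  have hu : IsUnit P := (Matrix.isUnit_iff_isUnit_det P).2 (isUnit_iff_ne_zero.2 hP)
  obtain ⟨u, rfl⟩ := hu
  exact ⟨u, h⟩

lemma isConj_tr_det {F : Type*} [Field F] {D M : Matrix (Fin 2) (Fin 2) F}
    (h : IsConj D M) : M.trace = D.trace ∧ M.det = D.det := by
  obtain ⟨u, hu⟩ := h
  have hM : M = u.val * D * u⁻¹.val := by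
    rw [hu.eq, mul_assoc, Units.mul_inv, mul_one]
  constructor
  · rw [hM, Matrix.trace_mul_comm, ← mul_assoc, Units.inv_mul, one_mul]
  · rw [hM, Matrix.det_mul, Matrix.det_mul, mul_right_comm, ← Matrix.det_mul, Units.mul_inv,
      Matrix.det_one, one_mul]

lemma isConj_diag_iff {F : Type*} [Field F] (a b : F) (hab : a ≠ b)
    (M : Matrix (Fin 2) (Fin 2) F) :
    IsConj (Matrix.diagonal ![a, b]) M ↔ M.trace = a + b ∧ M.det = a * b := by
  constructor
  · intro h
    simpa [Matrix.trace_fin_two, Matrix.det_fin_two] using isConj_tr_det h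
  · rintro ⟨ht, hd⟩
    have hab' : a - b ≠ 0 := sub_ne_zero.2 hab
    rw [Matrix.trace_fin_two] at ht
    rw [Matrix.det_fin_two] at hd
    obtain ⟨x, y, z, w, rfl⟩ : ∃ x y z w, M = !![x, y; z, w] := ⟨_, _, _, _, M.eta_fin_two⟩
    simp at ht hd
    by_cases hy : y = 0
    · subst hy
      have hx : (x - a) * (x - b) = 0 := by linear_combination x * ht - hd
      rcases mul_eq_zero.1 hx with h | h
      · obtain rfl : x = a := sub_eq_zero.1 h
        obtain rfl : w = b := by linear_combination ht
        refine isConj_of_mul_eq' !![x - w, 0; z, 1] _ _ (by simpa [Matrix.det_fin_two] using hab') ?_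
        ext i j
        fin_cases i <;> fin_cases j <;> simp [Matrix.mul_apply, Fin.sum_univ_two] <;> ring
      · obtain rfl : x = b := sub_eq_zero.1 h
        obtain rfl : w = a := by linear_combination ht
        refine isConj_of_mul_eq' !![0, x - w; 1, z] _ _
          (by simpa [Matrix.det_fin_two, sub_eq_zero] using hab) ?_
        ext i j
        fin_cases i <;> fin_cases j <;> simp [Matrix.mul_apply, Fin.sum_univ_two] <;> ring
    · refine isConj_of_mul_eq' !![y, y; a - x, b - x] _ _ ?_ ?_
      · have : (!![y, y; a - x, b - x] : Matrix (Fin 2) (Fin 2) F).det = -(y * (a - b)) := by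
          simp [Matrix.det_fin_two]; ring
        rw [this]
        exact neg_ne_zero.2 (mul_ne_zero hy hab')
      · obtain rfl : w = a + b - x := by linear_combination ht
        ext i j
        fin_cases i <;> fin_cases j <;> simp [Matrix.mul_apply, Fin.sum_univ_two]
        · ring
        · ring
        · linear_combination hd
        · linear_combination hd

lemma isConj_unip_iff {F : Type*} [Field F] (M : Matrix (Fin 2) (Fin 2) F) :
    IsConj (!![1, 1; 0, 1] : Matrix (Fin 2) (Fin 2) F) M ↔
      M.trace = 2 ∧ M.det = 1 ∧ M ≠ 1 := by
  constructor
  · intro h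
    have h1 := isConj_tr_det h
    refine ⟨by rw [h1.1]; simp [Matrix.trace_fin_two]; norm_num,
      by rw [h1.2]; simp [Matrix.det_fin_two], ?_⟩
    rintro rfl
    rw [isConj_comm, isConj_one_right] at h
    have := congrFun (congrFun h 0) 1
    simp at this
  · rintro ⟨ht, hd, hne⟩
    rw [Matrix.trace_fin_two] at ht
    rw [Matrix.det_fin_two] at hd
    obtain ⟨x, y, z, w, rfl⟩ : ∃ x y z w, M = !![x, y; z, w] := ⟨_, _, _, _, M.eta_fin_two⟩
    simp at ht hd
    obtain rfl : w = 2 - x := by linear_combination ht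
    by_cases hy : y = 0
    · by_cases hz : z = 0
      · subst hy hz
        exfalso
        apply hne
        have hx : (x - 1) ^ 2 = 0 := by linear_combination -hd
        obtain rfl : x = 1 := sub_eq_zero.1 (pow_eq_zero_iff (two_ne_zero)|>.1 hx)
        ext i j
        fin_cases i <;> fin_cases j <;> simp
        norm_num
      · refine isConj_of_mul_eq' !![x - 1, 1; z, 0] _ _ (by simpa [Matrix.det_fin_two] using hz) ?_
        ext i j
        fin_cases i <;> fin_cases j <;> simp [Matrix.mul_apply, Fin.sum_univ_two]
        · linear_combination hd
        · ring
    · refine isConj_of_mul_eq' !![y, 0; 1 - x, 1] _ _ (by simpa [Matrix.det_fin_two] using hy) ?_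
      ext i j
      fin_cases i <;> fin_cases j <;> simp [Matrix.mul_apply, Fin.sum_univ_two]
      · ring
      · linear_combination hd
      · ring

/-- Matrices with prescribed trace and determinant. -/
def TDset (F : Type*) [Field F] (a b : F) : Type _ :=
  {M : Matrix (Fin 2) (Fin 2) F // M.trace = a + b ∧ M.det = a * b}

/-- The second entries compatible with a given first entry. -/
def Fib (F : Type*) [Field F] (c d : F) (M : Matrix (Fin 2) (Fin 2) F) : Type _ :=
  {N : Matrix (Fin 2) (Fin 2) F // (N.trace = c + d ∧ N.det = c * d) ∧
    (M * N).trace = 2 ∧ M * N ≠ 1}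

lemma card_TDset {F : Type*} [Field F] [Fintype F] (a b : F) (hab : a ≠ b) :
    Nat.card (TDset F a b) = (Fintype.card F - 1) * Fintype.card F + 2 * Fintype.card F := by
  classical
  let f : (Fˣ × F) ⊕ (Bool × F) → TDset F a b := fun s => match s with
    | Sum.inl (u, x) => ⟨!![x, (u : F); (x - a) * (b - x) / u, a + b - x], by
        simp [Matrix.trace_fin_two], by
        have := u.ne_zero
        simp [Matrix.det_fin_two]; field_simp; ring⟩
    | Sum.inr (true, z) => ⟨!![a, 0; z, b], by simp [Matrix.trace_fin_two], by
        simp [Matrix.det_fin_two]⟩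
    | Sum.inr (false, z) => ⟨!![b, 0; z, a], by simp [Matrix.trace_fin_two, add_comm], by
        simp [Matrix.det_fin_two, mul_comm]⟩
  have hf : Function.Bijective f := by
    constructor
    · intro s t h
      have h00 := congrFun (congrFun (congrArg Subtype.val h) 0) 0
      have h01 := congrFun (congrFun (congrArg Subtype.val h) 0) 1
      have h10 := congrFun (congrFun (congrArg Subtype.val h) 1) 0
      rcases s with ⟨u, x⟩ | ⟨_ | _, x⟩ <;> rcases t with ⟨v, y⟩ | ⟨_ | _, y⟩ <;>
        simp_all [f, Units.ext_iff]
      all_goals exact v.ne_zero h01.symm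
    · rintro ⟨M, ht, hd⟩
      obtain ⟨x, y, z, w, rfl⟩ : ∃ x y z w, M = !![x, y; z, w] := ⟨_, _, _, _, M.eta_fin_two⟩
      simp [Matrix.trace_fin_two, Matrix.det_fin_two] at ht hd
      obtain rfl : w = a + b - x := by linear_combination ht
      by_cases hy : y = 0
      · subst hy
        have hx : (x - a) * (x - b) = 0 := by linear_combination - hd
        rcases mul_eq_zero.1 hx with h | h
        · obtain rfl : x = a := sub_eq_zero.1 h
          exact ⟨Sum.inr (true, z), Subtype.ext (by simp [f])⟩
        · obtain rfl : x = b := sub_eq_zero.1 h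
          exact ⟨Sum.inr (false, z), Subtype.ext (by simp [f])⟩
      · refine ⟨Sum.inl (Units.mk0 y hy, x), Subtype.ext ?_⟩
        have : (x - a) * (b - x) / y = z := by
          field_simp
          linear_combination hd
        simp [f, this]
  rw [← Nat.card_congr (Equiv.ofBijective f hf), Nat.card_eq_fintype_card]
  simp [Fintype.card_units]

lemma card_Fib_diag {F : Type*} [Field F] [Fintype F] (a b c d : F) (hab : a ≠ b)
    (hac : a * c = 1) (hbd : b * d = 1) :
    Nat.card (Fib F c d (Matrix.diagonal ![a, b])) = 2 * (Fintype.card F - 1) := by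
  classical
  have ha : a ≠ 0 := left_ne_zero_of_mul_eq_one hac
  have hb : b ≠ 0 := left_ne_zero_of_mul_eq_one hbd
  let f : Fˣ ⊕ Fˣ → Fib F c d (Matrix.diagonal ![a, b]) := fun s => match s with
    | Sum.inl u => ⟨!![c, (u : F); 0, d], by
        simp [Matrix.trace_fin_two, Matrix.det_fin_two], by
        simp [Matrix.trace_fin_two, hac, hbd]; norm_num, fun h => by
        have := congrFun (congrFun h 0) 1
        simp [ha] at this⟩
    | Sum.inr u => ⟨!![c, 0; (u : F), d], by
        simp [Matrix.trace_fin_two, Matrix.det_fin_two], by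
        simp [Matrix.trace_fin_two, hac, hbd]; norm_num, fun h => by
        have := congrFun (congrFun h 1) 0
        simp [hb] at this⟩
  have hf : Function.Bijective f := by
    constructor
    · intro s t h
      have h01 := congrFun (congrFun (congrArg Subtype.val h) 0) 1
      have h10 := congrFun (congrFun (congrArg Subtype.val h) 1) 0
      rcases s with u | u <;> rcases t with v | v <;> simp_all [f, Units.ext_iff]
      all_goals exact v.ne_zero h01.symm
    · rintro ⟨M, ⟨ht, hd⟩, h2, hne⟩
      obtain ⟨x, y, z, w, rfl⟩ : ∃ x y z w, M = !![x, y; z, w] := ⟨_, _, _, _, M.eta_fin_two⟩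
      simp [Matrix.trace_fin_two, Matrix.det_fin_two] at ht hd h2
      have hx : x = c := by
        have : (a - b) * (x - c) = 0 := by linear_combination h2 - b * ht - hac - hbd
        rcases mul_eq_zero.1 this with h | h
        · exact absurd (sub_eq_zero.1 h) hab
        · exact sub_eq_zero.1 h
      subst hx
      obtain rfl : w = d := by linear_combination ht
      have hyz : y * z = 0 := by linear_combination -hd
      by_cases hy : y = 0
      · by_cases hz : z = 0
        · exfalso
          apply hne
          ext i j
          fin_cases i <;> fin_cases j <;> simp [hac, hbd, hy, hz]
        · exact ⟨Sum.inr (Units.mk0 z hz), Subtype.ext (by simp [f, hy])⟩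
      · have hz : z = 0 := (mul_eq_zero.1 hyz).resolve_left hy
        exact ⟨Sum.inl (Units.mk0 y hy), Subtype.ext (by simp [f, hz])⟩
  rw [← Nat.card_congr (Equiv.ofBijective f hf), Nat.card_eq_fintype_card]
  simp [Fintype.card_units, two_mul]

lemma Fib_conj_aux {F : Type*} [Field F] {c d : F} {D M : Matrix (Fin 2) (Fin 2) F}
    (u : (Matrix (Fin 2) (Fin 2) F)ˣ) (hu : u.val * D = M * u.val)
    {N : Matrix (Fin 2) (Fin 2) F}
    (h : (N.trace = c + d ∧ N.det = c * d) ∧ (D * N).trace = 2 ∧ D * N ≠ 1) :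
    ((u.val * N * u⁻¹.val).trace = c + d ∧ (u.val * N * u⁻¹.val).det = c * d) ∧
      (M * (u.val * N * u⁻¹.val)).trace = 2 ∧ M * (u.val * N * u⁻¹.val) ≠ 1 := by
  have key : ∀ X : Matrix (Fin 2) (Fin 2) F, IsConj X (u.val * X * u⁻¹.val) := fun X =>
    ⟨u, by
      show u.val * X = u.val * X * u⁻¹.val * u.val
      rw [mul_assoc _ _ u.val, Units.inv_mul, mul_one]⟩
  have e : M * (u.val * N * u⁻¹.val) = u.val * (D * N) * u⁻¹.val := by
    simp only [← mul_assoc, hu]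
  rw [e]
  refine ⟨⟨(isConj_tr_det (key N)).1.trans h.1.1, (isConj_tr_det (key N)).2.trans h.1.2⟩,
    (isConj_tr_det (key _)).1.trans h.2.1, fun h1 => h.2.2 ?_⟩
  have := key (D * N)
  rw [h1, isConj_one_left] at this
  exact this

lemma card_Fib {F : Type*} [Field F] (c d : F) (D M : Matrix (Fin 2) (Fin 2) F)
    (h : IsConj D M) : Nonempty (Fib F c d M ≃ Fib F c d D) := by
  obtain ⟨u, hu⟩ := h
  have hu1 : u.val * D = M * u.val := hu
  have hu2 : u⁻¹.val * M = D * u⁻¹.val := by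
    have : u⁻¹.val * (u.val * D) * u⁻¹.val = u⁻¹.val * (M * u.val) * u⁻¹.val := by rw [hu1]
    rw [← mul_assoc, Units.inv_mul, one_mul] at this
    rw [this, mul_assoc, mul_assoc, Units.mul_inv, mul_one]
  exact ⟨{
    toFun := fun N => ⟨u⁻¹.val * N.1 * u.val, by simpa using Fib_conj_aux u⁻¹ hu2 N.2⟩
    invFun := fun N => ⟨u.val * N.1 * u⁻¹.val, Fib_conj_aux u hu1 N.2⟩
    left_inv := fun N => Subtype.ext (by simp [mul_assoc])
    right_inv := fun N => Subtype.ext (by simp [mul_assoc]) }⟩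

lemma core_count {F : Type*} [Field F] [Fintype F] (a b c d : F) (hab : a ≠ b)
    (hac : a * c = 1) (hbd : b * d = 1) :
    (Nat.card {x : Matrix (Fin 2) (Fin 2) F × Matrix (Fin 2) (Fin 2) F ×
        Matrix (Fin 2) (Fin 2) F //
        (x.1.trace = a + b ∧ x.1.det = a * b) ∧
        (x.2.1.trace = c + d ∧ x.2.1.det = c * d) ∧
        (x.2.2.trace = 2 ∧ x.2.2.det = 1 ∧ x.2.2 ≠ 1) ∧
        x.1 * x.2.1 * x.2.2 = 1} : ℤ)
      = 2 * ((Fintype.card F : ℤ) ^ 3 - Fintype.card F) := by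
  have hadj : ∀ X : Matrix (Fin 2) (Fin 2) F, X.adjugate.trace = X.trace := fun X => by
    rw [Matrix.adjugate_fin_two]; simp [Matrix.trace_fin_two, add_comm]
  have hdet : ∀ X : Matrix (Fin 2) (Fin 2) F, X.det = 1 → X * X.adjugate = 1 := fun X h => by
    rw [Matrix.mul_adjugate, h, one_smul]
  have hinv : ∀ X Y : Matrix (Fin 2) (Fin 2) F, X.det = 1 → X * Y = 1 → Y = X.adjugate :=
    fun X Y h h1 => (left_inv_eq_right_inv (mul_eq_one_comm.1 h1) (hdet X h))
  have hMN : ∀ M N : Matrix (Fin 2) (Fin 2) F, M.det = a * b → N.det = c * d →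
      (M * N).det = 1 := fun M N h1 h2 => by
    rw [Matrix.det_mul, h1, h2]; linear_combination b * d * hac + hbd
  let e1 : {x : Matrix (Fin 2) (Fin 2) F × Matrix (Fin 2) (Fin 2) F ×
        Matrix (Fin 2) (Fin 2) F //
        (x.1.trace = a + b ∧ x.1.det = a * b) ∧
        (x.2.1.trace = c + d ∧ x.2.1.det = c * d) ∧
        (x.2.2.trace = 2 ∧ x.2.2.det = 1 ∧ x.2.2 ≠ 1) ∧
        x.1 * x.2.1 * x.2.2 = 1} ≃ (Σ M : TDset F a b, Fib F c d M.1) :=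
    { toFun := fun x => ⟨⟨x.1.1, x.2.1⟩, ⟨x.1.2.1, x.2.2.1, by
          have h := hinv _ _ (hMN _ _ x.2.1.2 x.2.2.1.2) x.2.2.2.2
          rw [← hadj, ← h]; exact x.2.2.2.1.1, fun h => by
          have h1 := x.2.2.2.2
          rw [h, one_mul] at h1
          exact x.2.2.2.1.2.2 h1⟩⟩
      invFun := fun p => ⟨(p.1.1, p.2.1, (p.1.1 * p.2.1).adjugate), p.1.2, p.2.2.1,
        ⟨by rw [hadj]; exact p.2.2.2.1, by
          rw [Matrix.det_adjugate, hMN _ _ p.1.2.2 p.2.2.1.2, one_pow], fun h => by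
          have h1 := hdet _ (hMN _ _ p.1.2.2 p.2.2.1.2)
          have h2 : (p.1.1 * p.2.1).adjugate = 1 := h
          rw [h2, mul_one] at h1
          exact p.2.2.2.2 h1⟩, hdet _ (hMN _ _ p.1.2.2 p.2.2.1.2)⟩
      left_inv := by
        rintro ⟨⟨M, N, U⟩, h⟩
        apply Subtype.ext
        have h' := hinv (M * N) U (hMN _ _ h.1.2 h.2.1.2) h.2.2.2
        simp only [h']
      right_inv := fun p => rfl }
  have e2 : ∀ M : TDset F a b, Fib F c d M.1 ≃ Fib F c d (Matrix.diagonal ![a, b]) := fun M =>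
    Classical.choice (card_Fib c d _ _ ((isConj_diag_iff a b hab M.1).2 M.2))
  rw [Nat.card_congr (e1.trans ((Equiv.sigmaCongrRight e2).trans (Equiv.sigmaEquivProd _ _))),
    Nat.card_prod, card_TDset a b hab, card_Fib_diag a b c d hab hac hbd]
  obtain ⟨n, hn⟩ : ∃ n, Fintype.card F = n + 1 :=
    Nat.exists_eq_succ_of_ne_zero Fintype.card_ne_zero
  rw [hn, Nat.add_sub_cancel]
  push_cast
  ring

/-- Genus 0, three punctures, `GL₂`, non-generic case: with `C₁, C₂` the classes of
`diag(a,b)`, `diag(c,d)` (with `abcd = 1` and `1 ∈ {ac, ad, bc, bd}`) and `C₃` the regular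
unipotent class, the number of triples `(S₁,S₂,S₃) ∈ C₁ × C₂ × C₃` with `S₁S₂S₃ = 1` is
`2(q³ - q)`. -/
theorem GL2_triple_count_nongeneric
    {F : Type*} [Field F] [Fintype F] (hchar : ringChar F ≠ 2)
    (q : ℕ) (hq : q = Fintype.card F)
    (a b c d : F) (ha0 : a ≠ 0) (hb0 : b ≠ 0) (hc0 : c ≠ 0) (hd0 : d ≠ 0)
    (hab : a ≠ b) (hcd : c ≠ d) (habcd : a * b * c * d = 1)
    (hng : a * c = 1 ∨ a * d = 1 ∨ b * c = 1 ∨ b * d = 1) :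
    (Nat.card {x : Matrix (Fin 2) (Fin 2) F × Matrix (Fin 2) (Fin 2) F ×
        Matrix (Fin 2) (Fin 2) F //
        IsConj (Matrix.diagonal ![a, b]) x.1 ∧
        IsConj (Matrix.diagonal ![c, d]) x.2.1 ∧
        IsConj (!![1, 1; 0, 1] : Matrix (Fin 2) (Fin 2) F) x.2.2 ∧
        x.1 * x.2.1 * x.2.2 = 1} : ℤ) = 2 * ((q : ℤ) ^ 3 - q) := by
  simp only [isConj_diag_iff a b hab, isConj_diag_iff c d hcd, isConj_unip_iff]
  subst hq
  rcases hng with h | h | h | h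
  · exact core_count a b c d hab h (by linear_combination habcd - b * d * h)
  · have := core_count a b d c hab h (by linear_combination habcd - b * c * h)
    rwa [add_comm d c, mul_comm d c] at this
  · have := core_count b a c d hab.symm h (by linear_combination habcd - a * d * h)
    rwa [add_comm b a, mul_comm b a] at this
  · have := core_count b a d c hab.symm h (by linear_combination habcd - a * c * h)
    rwa [add_comm b a, mul_comm b a, add_comm d c, mul_comm d c] at this
end

section
/- Let F be a finite field with q elements of odd characteristic and let a, b, t ∈ Fˣ satisfy a ∉ {1, −1}, b ∉ {1, −1}, ab = t², ab ≠ 1, and a ≠ b. In PGL₂(F) := GL₂(F)/{scalar matrices}, let C₁, C₂ be the conjugacy classes of the images of diag(a,1) and diag(b,1), and let C₃ be the conjugacy class of the image of [[1,1],[0,1]]. Then the number of triples (x₁, x₂, x₃) ∈ C₁ × C₂ × C₃ with x₁x₂x₃ = 1 equals 2(q³ − q); equivalently, such triples form exactly two orbits under simultaneous conjugation by PGL₂(F). -/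
theorem triple_count_group {G : Type*} [Group G] [Finite G] (d₁ d₂ j : G) (β : Bool → G)
    (h1 : ∀ e, IsConj d₂ (β e)) (h2 : ∀ e, IsConj j (d₁ * β e)⁻¹)
    (h3 : ∀ y, IsConj d₂ y → IsConj j (d₁ * y)⁻¹ →
      ∃ e k, k * d₁ * k⁻¹ = d₁ ∧ k * β e * k⁻¹ = y)
    (h4 : ∀ k e e', k * d₁ * k⁻¹ = d₁ → k * β e * k⁻¹ = β e' → k = 1 ∧ e = e') :
    Nat.card {x : G × G × G // IsConj d₁ x.1 ∧ IsConj d₂ x.2.1 ∧ IsConj j x.2.2 ∧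
      x.1 * x.2.1 * x.2.2 = 1} = 2 * Nat.card G := by
  let f : Bool × G → {x : G × G × G // IsConj d₁ x.1 ∧ IsConj d₂ x.2.1 ∧ IsConj j x.2.2 ∧
      x.1 * x.2.1 * x.2.2 = 1} := fun p =>
    ⟨(p.2 * d₁ * p.2⁻¹, p.2 * β p.1 * p.2⁻¹, p.2 * (d₁ * β p.1)⁻¹ * p.2⁻¹),
      isConj_iff.2 ⟨p.2, rfl⟩, (h1 p.1).trans (isConj_iff.2 ⟨p.2, rfl⟩),
      (h2 p.1).trans (isConj_iff.2 ⟨p.2, rfl⟩), by simp [mul_assoc]⟩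
  have hf : Function.Bijective f := by
    constructor
    · rintro ⟨e, g⟩ ⟨e', g'⟩ h
      have hA : g * d₁ * g⁻¹ = g' * d₁ * g'⁻¹ := congrArg (fun x => x.1.1) h
      have hB : g * β e * g⁻¹ = g' * β e' * g'⁻¹ := congrArg (fun x => x.1.2.1) h
      obtain ⟨hk, he⟩ := h4 (g'⁻¹ * g) e e'
        (by
          calc g'⁻¹ * g * d₁ * (g'⁻¹ * g)⁻¹ = g'⁻¹ * (g * d₁ * g⁻¹) * g' := by group
            _ = d₁ := by rw [hA]; group)
        (by
          calc g'⁻¹ * g * β e * (g'⁻¹ * g)⁻¹ = g'⁻¹ * (g * β e * g⁻¹) * g' := by group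
            _ = β e' := by rw [hB]; group)
      rw [inv_mul_eq_one] at hk
      rw [hk, he]
    · rintro ⟨⟨x, y, z⟩, hx, hy, hz, hm⟩
      simp only at hx hy hz hm
      obtain ⟨g, rfl⟩ := isConj_iff.1 hx
      have hz' : z = (g * d₁ * g⁻¹ * y)⁻¹ := (inv_eq_of_mul_eq_one_right hm).symm
      obtain ⟨e, k, hk1, hk2⟩ := h3 (g⁻¹ * y * g)
        (hy.trans (isConj_iff.2 ⟨g⁻¹, by group⟩))
        (hz.trans (isConj_iff.2 ⟨g⁻¹, by rw [hz']; group⟩))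
      have e1 : g * k * d₁ * (g * k)⁻¹ = g * d₁ * g⁻¹ := by
        calc g * k * d₁ * (g * k)⁻¹ = g * (k * d₁ * k⁻¹) * g⁻¹ := by group
          _ = _ := by rw [hk1]
      have e2 : g * k * β e * (g * k)⁻¹ = y := by
        calc g * k * β e * (g * k)⁻¹ = g * (k * β e * k⁻¹) * g⁻¹ := by group
          _ = _ := by rw [hk2]; group
      refine ⟨(e, g * k), Subtype.ext (Prod.ext e1 (Prod.ext e2 ?_))⟩
      show g * k * (d₁ * β e)⁻¹ * (g * k)⁻¹ = z
      rw [hz', ← e1, ← e2]; group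
  rw [← Nat.card_congr (Equiv.ofBijective f hf), Nat.card_prod]
  simp

theorem pgl_mk_eq {F : Type*} [Field F] (g h : (Matrix (Fin 2) (Fin 2) F)ˣ) :
    ((g : (Matrix (Fin 2) (Fin 2) F)ˣ ⧸ Subgroup.center (Matrix (Fin 2) (Fin 2) F)ˣ) = h) ↔
      ∃ c : F, c ≠ 0 ∧ (h : Matrix (Fin 2) (Fin 2) F) = c • (g : Matrix (Fin 2) (Fin 2) F) := by
  have := Matrix.ProjGenLinGroup.mk_eq_mk_iff' (g₁ := g) (g₂ := h)
  rw [QuotientGroup.eq, Matrix.GeneralLinearGroup.center_eq_range_scalar]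
  constructor
  · rintro ⟨u, hu⟩
    refine ⟨u, u.ne_zero, ?_⟩
    have : h = g * Matrix.GeneralLinearGroup.scalar (Fin 2) u := by rw [hu]; group
    rw [this]
    simp [Matrix.smul_eq_mul_diagonal]
  · rintro ⟨c, hc, hh⟩
    refine ⟨Units.mk0 c hc, ?_⟩
    rw [eq_inv_mul_iff_mul_eq]
    ext1
    rw [hh]
    simp [Matrix.smul_eq_mul_diagonal]

theorem pgl_conj_eq {F : Type*} [Field F] (k X Y : (Matrix (Fin 2) (Fin 2) F)ˣ) :
    ((k : (Matrix (Fin 2) (Fin 2) F)ˣ ⧸ Subgroup.center (Matrix (Fin 2) (Fin 2) F)ˣ) * X *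
      (k : (Matrix (Fin 2) (Fin 2) F)ˣ ⧸ Subgroup.center (Matrix (Fin 2) (Fin 2) F)ˣ)⁻¹ = Y) ↔
      ∃ c : F, c ≠ 0 ∧ (Y * k : Matrix (Fin 2) (Fin 2) F) =
        c • (k * X : Matrix (Fin 2) (Fin 2) F) := by
  rw [mul_inv_eq_iff_eq_mul, ← QuotientGroup.mk_mul, ← QuotientGroup.mk_mul, pgl_mk_eq]
  simp only [Units.val_mul]

theorem pgl_card {F : Type*} [Field F] [Fintype F] :
    (Nat.card ((Matrix (Fin 2) (Fin 2) F)ˣ ⧸ Subgroup.center (Matrix (Fin 2) (Fin 2) F)ˣ) : ℤ) =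
      (Fintype.card F : ℤ) ^ 3 - Fintype.card F := by
  have h1 := (Subgroup.center (Matrix (Fin 2) (Fin 2) F)ˣ).card_eq_card_quotient_mul_card_subgroup
  have h2 : Nat.card (Matrix (Fin 2) (Fin 2) F)ˣ = _ := Matrix.card_GL_field (𝔽 := F) 2
  have h3 : Nat.card (Subgroup.center (Matrix (Fin 2) (Fin 2) F)ˣ) = Fintype.card F - 1 := by
    rw [← Nat.card_eq_fintype_card (α := F), ← Nat.card_units,
      Matrix.GeneralLinearGroup.center_eq_range_scalar]
    refine (Nat.card_congr (MonoidHom.ofInjective (f := Matrix.GeneralLinearGroup.scalar (Fin 2))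
      ?_).toEquiv).symm
    intro u v huv
    have h := congrArg (fun g : GL (Fin 2) F => (g : Matrix (Fin 2) (Fin 2) F) 0 0) huv
    ext
    simpa using h
  rw [h2, h3] at h1
  have hq : 1 < Fintype.card F := Fintype.one_lt_card
  set q := Fintype.card F
  simp only [Fin.prod_univ_two] at h1
  have h4 : q ≤ q ^ 2 := Nat.le_self_pow (by norm_num) q
  have h5 : 1 ≤ q ^ 2 := Nat.one_le_pow _ _ (by omega)
  have h6 := congrArg (Nat.cast : ℕ → ℤ) h1
  simp only [Fin.val_zero, Fin.val_one, pow_zero, pow_one] at h6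
  push_cast [Nat.cast_sub h4, Nat.cast_sub h5, Nat.cast_sub hq.le] at h6
  have h7 : ((q : ℤ) - 1) ≠ 0 := by
    have : (1 : ℤ) < q := by exact_mod_cast hq
    omega
  apply mul_right_cancel₀ h7
  rw [← h6]; ring


/-- Genus 0, three punctures, `PGL₂` (the quotient of `GL₂(F)` by the scalar matrices,
i.e. by its centre), generic case: with `C₁, C₂` the classes of the images of `diag(a,1)`,
`diag(b,1)` and `C₃` the class of the image of the regular unipotent `[[1,1],[0,1]]`,
the number of triples `(x₁,x₂,x₃) ∈ C₁ × C₂ × C₃` with `x₁x₂x₃ = 1` is `2(q³ - q)`. -/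
theorem PGL2_triple_count_generic
    {F : Type*} [Field F] [Fintype F] (hchar : ringChar F ≠ 2)
    (q : ℕ) (hq : q = Fintype.card F)
    (a b t : F) (ha0 : a ≠ 0) (hb0 : b ≠ 0) (ht0 : t ≠ 0)
    (ha1 : a ≠ 1) (ha1' : a ≠ -1) (hb1 : b ≠ 1) (hb1' : b ≠ -1)
    (habt : a * b = t ^ 2) (hab1 : a * b ≠ 1) (hab : a ≠ b)
    (D₁ D₂ J : (Matrix (Fin 2) (Fin 2) F)ˣ)
    (hD₁ : (D₁ : Matrix (Fin 2) (Fin 2) F) = Matrix.diagonal ![a, 1])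
    (hD₂ : (D₂ : Matrix (Fin 2) (Fin 2) F) = Matrix.diagonal ![b, 1])
    (hJ : (J : Matrix (Fin 2) (Fin 2) F) = !![1, 1; 0, 1]) :
    (Nat.card {x :
        ((Matrix (Fin 2) (Fin 2) F)ˣ ⧸ Subgroup.center (Matrix (Fin 2) (Fin 2) F)ˣ) ×
        ((Matrix (Fin 2) (Fin 2) F)ˣ ⧸ Subgroup.center (Matrix (Fin 2) (Fin 2) F)ˣ) ×
        ((Matrix (Fin 2) (Fin 2) F)ˣ ⧸ Subgroup.center (Matrix (Fin 2) (Fin 2) F)ˣ) //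
        IsConj ((D₁ : (Matrix (Fin 2) (Fin 2) F)ˣ ⧸
          Subgroup.center (Matrix (Fin 2) (Fin 2) F)ˣ)) x.1 ∧
        IsConj ((D₂ : (Matrix (Fin 2) (Fin 2) F)ˣ ⧸
          Subgroup.center (Matrix (Fin 2) (Fin 2) F)ˣ)) x.2.1 ∧
        IsConj ((J : (Matrix (Fin 2) (Fin 2) F)ˣ ⧸
          Subgroup.center (Matrix (Fin 2) (Fin 2) F)ˣ)) x.2.2 ∧
        x.1 * x.2.1 * x.2.2 = 1} : ℤ) = 2 * ((q : ℤ) ^ 3 - q) := by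
  have h2F : (2 : F) ≠ 0 := Ring.two_ne_zero hchar
  have ha1s : a - 1 ≠ 0 := sub_ne_zero.2 ha1
  have hD₁' : (D₁ : Matrix (Fin 2) (Fin 2) F) = !![a, 0; 0, 1] := by
    rw [hD₁]; ext i j; fin_cases i <;> fin_cases j <;> simp
  have hD₂' : (D₂ : Matrix (Fin 2) (Fin 2) F) = !![b, 0; 0, 1] := by
    rw [hD₂]; ext i j; fin_cases i <;> fin_cases j <;> simp
  have mkU : ∀ x y z w : F, x * w - y * z ≠ 0 →
      ∃ U : (Matrix (Fin 2) (Fin 2) F)ˣ, (U : Matrix (Fin 2) (Fin 2) F) = !![x, y; z, w] := by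
    intro x y z w h
    exact ⟨Matrix.GeneralLinearGroup.mkOfDetNeZero !![x, y; z, w]
      (by rwa [Matrix.det_fin_two_of]), rfl⟩
  obtain ⟨σ, hσ⟩ : ∃ σ : Bool → F, σ = fun e => if e then t else -t := ⟨_, rfl⟩
  have hσ2 : ∀ e, σ e ^ 2 = a * b := by
    intro e; rw [hσ, habt]; cases e <;> simp
  have hσ0 : ∀ e, σ e ≠ 0 := by
    intro e; rw [hσ]; cases e <;> simpa using ht0
  have hσi : ∀ e e', σ e = σ e' → e = e' := by
    have h1 : ¬ t = -t := by
      intro h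
      have : 2 * t = 0 := by linear_combination h
      exact (mul_ne_zero h2F ht0) this
    intro e e' h
    rw [hσ] at h
    cases e <;> cases e' <;> simp_all
  have hX : ∀ e, ∃ x : F, (a - 1) * x = 2 * σ e - b - 1 := fun e =>
    ⟨(2 * σ e - b - 1) / (a - 1), by field_simp⟩
  choose X hX using hX
  obtain ⟨n, hn⟩ : ∃ n : Bool → F, ∀ e, n e = X e * (b + 1 - X e) - b := ⟨_, fun _ => rfl⟩
  have hn0 : ∀ e, n e ≠ 0 := by
    intro e h0
    have hp : (X e - b) * (X e - 1) = 0 := by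
      rw [hn] at h0; linear_combination -h0
    rcases mul_eq_zero.1 hp with h | h
    · have h1 : (σ e - 1) ^ 2 = 0 := by
        linear_combination hσ2 e + hX e - (a - 1) * h
      have h2 : σ e = 1 := sub_eq_zero.1 (pow_eq_zero_iff (by norm_num) |>.1 h1)
      exact hab1 (by rw [← hσ2 e, h2]; ring)
    · have h1 : (a - b) ^ 2 = 0 := by
        have h3 : a + b = 2 * σ e := by linear_combination hX e - (a - 1) * h
        linear_combination (a + b + 2 * σ e) * h3 + 4 * hσ2 e
      exact hab (sub_eq_zero.1 (pow_eq_zero_iff (by norm_num) |>.1 h1))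
  have hB : ∀ e, ∃ U : (Matrix (Fin 2) (Fin 2) F)ˣ,
      (U : Matrix (Fin 2) (Fin 2) F) = !![X e, 1; n e, b + 1 - X e] := by
    intro e
    apply mkU
    rw [hn]; intro h; apply hb0; linear_combination h
  choose B hB using hB
  rw [hq]
  have key := triple_count_group
    (G := (Matrix (Fin 2) (Fin 2) F)ˣ ⧸ Subgroup.center (Matrix (Fin 2) (Fin 2) F)ˣ)
    D₁ D₂ J (fun e => (B e : (Matrix (Fin 2) (Fin 2) F)ˣ ⧸ Subgroup.center (Matrix (Fin 2) (Fin 2) F)ˣ))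
    ?_ ?_ ?_ ?_
  · rw [key]
    push_cast
    rw [pgl_card]
  · intro e
    obtain ⟨P, hP⟩ := mkU 1 1 (b - X e) (1 - X e)
      (by intro h; apply hb1; linear_combination -h)
    refine isConj_iff.2 ⟨P, (pgl_conj_eq _ _ _).2 ⟨1, one_ne_zero, ?_⟩⟩
    rw [hP, hB, hD₂', one_smul, hn]
    ext i j; fin_cases i <;> fin_cases j <;> simp [Matrix.mul_apply, Fin.sum_univ_two] <;> ring
  · intro e
    obtain ⟨Q, hQ⟩ := mkU (-a) 0 (σ e - (b + 1 - X e)) (σ e)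
      (by simpa using ⟨ha0, hσ0 e⟩)
    rw [← QuotientGroup.mk_mul, ← QuotientGroup.mk_inv]
    refine isConj_iff.2 ⟨Q, (pgl_conj_eq _ _ _).2 ⟨(σ e)⁻¹, inv_ne_zero (hσ0 e), ?_⟩⟩
    have h1 : (Q : Matrix (Fin 2) (Fin 2) F) =
        (D₁ * B e : (Matrix (Fin 2) (Fin 2) F)ˣ) * ((σ e)⁻¹ • (Q * J : Matrix (Fin 2) (Fin 2) F)) := by
      have hs := hσ0 e
      rw [Matrix.mul_smul, eq_inv_smul_iff₀ hs, Units.val_mul, hQ, hB, hD₁', hJ, hn]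
      ext i j
      fin_cases i <;> fin_cases j <;> simp [Matrix.mul_apply, Fin.sum_univ_two]
      · linear_combination a * hX e
      · linear_combination a * hX e
      · linear_combination (b + 1 - X e) * hX e + hσ2 e
      · linear_combination (b + 1 - X e) * hX e + hσ2 e
    rw [Units.inv_mul_eq_iff_eq_mul]
    exact h1
  · intro y hy hz
    obtain ⟨p, hp⟩ := isConj_iff.1 hy
    obtain ⟨P, rfl⟩ := QuotientGroup.mk_surjective p
    obtain ⟨Y, hY⟩ : ∃ Y : (Matrix (Fin 2) (Fin 2) F)ˣ, Y = P * D₂ * P⁻¹ := ⟨_, rfl⟩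
    have hyY : y = Y := by rw [← hp, hY]; rfl
    rw [hyY] at hz ⊢
    have htr : Matrix.trace (Y : Matrix (Fin 2) (Fin 2) F) = b + 1 := by
      rw [hY, Units.val_mul, Units.val_mul, Matrix.trace_units_conj, hD₂']
      simp [Matrix.trace_fin_two]
    have hdet : Matrix.det (Y : Matrix (Fin 2) (Fin 2) F) = b := by
      rw [hY, Units.val_mul, Units.val_mul, Matrix.det_units_conj, hD₂']
      simp
    obtain ⟨r, hr⟩ := isConj_iff.1 hz
    obtain ⟨R, rfl⟩ := QuotientGroup.mk_surjective r
    rw [← QuotientGroup.mk_inv, ← QuotientGroup.mk_mul, ← QuotientGroup.mk_mul,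
      ← QuotientGroup.mk_mul, ← QuotientGroup.mk_inv, eq_comm, ← inv_inj, ← QuotientGroup.mk_inv,
      ← QuotientGroup.mk_inv, eq_comm, pgl_mk_eq, inv_inv,
      show (R * J * R⁻¹)⁻¹ = R * J⁻¹ * R⁻¹ by group] at hr
    obtain ⟨c, hc, hr⟩ := hr
    have hJi : ((J⁻¹ : (Matrix (Fin 2) (Fin 2) F)ˣ) : Matrix (Fin 2) (Fin 2) F) = !![1, -1; 0, 1] := by
      apply Units.inv_eq_of_mul_eq_one_right
      rw [hJ]
      ext i j; fin_cases i <;> fin_cases j <;> simp [Matrix.mul_apply, Fin.sum_univ_two]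
    have htr2 := congrArg Matrix.trace hr
    have hdet2 := congrArg Matrix.det hr
    rw [Matrix.trace_smul, Units.val_mul, Units.val_mul, Units.val_mul, Matrix.trace_units_conj, hJi, hD₁'] at htr2
    rw [Matrix.det_smul, Units.val_mul, Units.val_mul, Units.val_mul, Matrix.det_units_conj, hJi, Matrix.det_mul, hD₁', hdet] at hdet2
    obtain ⟨x, y', z, w, hxy⟩ : ∃ x y z w : F, (Y : Matrix (Fin 2) (Fin 2) F) = !![x, y; z, w] :=
      ⟨_, _, _, _, Matrix.eta_fin_two _⟩
    rw [hxy, Matrix.trace_fin_two] at htr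
    rw [hxy, Matrix.det_fin_two] at hdet
    rw [hxy, Matrix.trace_fin_two, Matrix.trace_fin_two] at htr2
    simp [Matrix.mul_apply, Fin.sum_univ_two] at htr hdet htr2 hdet2
    obtain ⟨e, he⟩ : ∃ e, c = σ e := by
      have : (c - t) * (c + t) = 0 := by linear_combination -hdet2 + habt
      rcases mul_eq_zero.1 this with h | h
      · exact ⟨true, by rw [hσ]; simpa using sub_eq_zero.1 h⟩
      · exact ⟨false, by rw [hσ]; simpa using eq_neg_of_add_eq_zero_left h⟩
    subst he
    have hx : x = X e := by
      apply mul_left_cancel₀ ha1s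
      linear_combination htr2 - htr - hX e
    have hw : w = b + 1 - X e := by rw [← hx]; linear_combination htr
    have hyz : y' * z = n e := by rw [hn, ← hx]; linear_combination x * htr - hdet
    have hy0 : y' ≠ 0 := by
      rintro rfl; exact hn0 e (by rw [← hyz]; ring)
    obtain ⟨K, hK⟩ := mkU y' 0 0 1 (by simpa using hy0)
    refine ⟨e, K, (pgl_conj_eq _ _ _).2 ⟨1, one_ne_zero, ?_⟩,
      (pgl_conj_eq _ _ _).2 ⟨1, one_ne_zero, ?_⟩⟩
    · rw [hK, hD₁', one_smul]
      ext i j; fin_cases i <;> fin_cases j <;> simp [Matrix.mul_apply, Fin.sum_univ_two, mul_comm]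
    · rw [hK, hxy, hB, one_smul, ← hyz, hx, hw]
      ext i j; fin_cases i <;> fin_cases j <;> simp [Matrix.mul_apply, Fin.sum_univ_two, mul_comm]
  · intro k e e' hk1 hk2
    obtain ⟨K, rfl⟩ := QuotientGroup.mk_surjective k
    obtain ⟨c, hc, h1⟩ := (pgl_conj_eq _ _ _).1 hk1
    obtain ⟨d, hd, h2⟩ := (pgl_conj_eq _ _ _).1 hk2
    have hKd : (K : Matrix (Fin 2) (Fin 2) F).det ≠ 0 := Matrix.GeneralLinearGroup.det_ne_zero K
    obtain ⟨p, u, v, w, hK⟩ : ∃ x y z w : F, (K : Matrix (Fin 2) (Fin 2) F) = !![x, y; z, w] :=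
      ⟨_, _, _, _, Matrix.eta_fin_two _⟩
    have hd1 : d = 1 := by
      have h3 : (B e' : Matrix (Fin 2) (Fin 2) F) = d • (K * B e * (K⁻¹ : (Matrix (Fin 2) (Fin 2) F)ˣ)) := by
        rw [← Matrix.smul_mul, ← h2, Units.mul_inv_cancel_right]
      have h4 := congrArg Matrix.trace h3
      rw [Matrix.trace_smul, Matrix.trace_units_conj, hB, hB, Matrix.trace_fin_two,
        Matrix.trace_fin_two] at h4
      simp at h4
      have hb : b + 1 ≠ 0 := fun h => hb1' (eq_neg_of_add_eq_zero_left h)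
      apply mul_right_cancel₀ hb
      linear_combination -h4
    rw [hK, Matrix.det_fin_two_of] at hKd
    rw [hK, hD₁'] at h1
    rw [hK, hB, hB, hd1, one_smul] at h2
    have e00 := congrFun (congrFun h1 0) 0
    have e01 := congrFun (congrFun h1 0) 1
    have e10 := congrFun (congrFun h1 1) 0
    have e11 := congrFun (congrFun h1 1) 1
    have f00 := congrFun (congrFun h2 0) 0
    have f01 := congrFun (congrFun h2 0) 1
    simp [Matrix.mul_apply, Fin.sum_univ_two] at e00 e01 e10 e11 f00 f01
    have hc1 : c = 1 := by
      by_contra hne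
      have hne' : 1 - c ≠ 0 := fun h => hne (sub_eq_zero.1 h).symm
      have hw : w = 0 := by
        apply mul_left_cancel₀ hne'; linear_combination e11
      have hp : p = 0 := by
        apply mul_left_cancel₀ (mul_ne_zero ha0 hne'); linear_combination e00
      rw [hw, hp] at hKd
      have hu : u ≠ 0 := by rintro rfl; simp at hKd
      have hv : v ≠ 0 := by rintro rfl; simp at hKd
      have hac : a = c := e01.resolve_right hu
      have h5 : (a - 1) * (a + 1) = 0 := by
        apply mul_left_cancel₀ hv
        rw [← hac] at e10
        linear_combination -e10
      rcases mul_eq_zero.1 h5 with h | h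
      · exact ha1 (sub_eq_zero.1 h)
      · exact ha1' (eq_neg_of_add_eq_zero_left h)
    rw [hc1] at e01 e10
    have hu : u = 0 := e01.resolve_left ha1
    have hv : v = 0 := by
      apply mul_left_cancel₀ ha1s; linear_combination -e10
    rw [hu, hv] at f00
    rw [hu] at f01
    rw [hu, hv] at hKd
    have hp0 : p ≠ 0 := by rintro rfl; simp at hKd
    have hpw : w = p := by linear_combination f01
    have hXX : X e' = X e := by
      apply mul_left_cancel₀ hp0; linear_combination f00
    constructor
    · refine Eq.symm ((pgl_mk_eq 1 K).2 ⟨p, hp0, ?_⟩)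
      rw [hK, hu, hv, hpw, Units.val_one]
      ext i j; fin_cases i <;> fin_cases j <;> simp
    · apply hσi
      apply mul_left_cancel₀ h2F
      have h6 := hX e'
      rw [hXX] at h6
      linear_combination h6 - hX e
end

section
/- Let k be a field of characteristic ≠ 2 and let a, b, t ∈ kˣ satisfy a ∉ {1, −1}, b ∉ {1, −1}, ab = t², ab ≠ 1, and a ≠ b. Define X₁ = [[at, 0], [(t−a)(t−1), t]], X₂ = [[−t, t], [(t−a)(t−1), −t²+t−a]], X₃ = [[1,1],[0,1]], and Y₁ = [[at, 0], [−(t+a)(t+1), t]], Y₂ = [[−t, t], [−(t+a)(t+1), t²+t+a]], Y₃ = [[1,1],[0,1]]. Then there is no one-dimensional subspace L of k² with X₁L ⊆ L, X₂L ⊆ L and X₃L ⊆ L, and likewise no one-dimensional subspace invariant under Y₁, Y₂ and Y₃; that is, both triples are irreducible. -/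
/-- A line invariant under the standard unipotent matrix is spanned by the first basis vector,
so it is not invariant under a lower triangular matrix with nonzero corner entry. -/
theorem no_invariant_line {k : Type*} [Field k] (p c q : k) (hc : c ≠ 0)
    (L : Submodule k (Fin 2 → k)) (hL : Module.finrank k L = 1)
    (h1 : ∀ v ∈ L, (!![p, 0; c, q] : Matrix (Fin 2) (Fin 2) k).mulVec v ∈ L)
    (h3 : ∀ v ∈ L, (!![1, 1; 0, 1] : Matrix (Fin 2) (Fin 2) k).mulVec v ∈ L) : False := by
  obtain ⟨⟨v, hv⟩, hv0, hs⟩ := finrank_eq_one_iff'.mp hL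
  obtain ⟨r, hr⟩ := hs ⟨_, h3 v hv⟩
  obtain ⟨s, hs'⟩ := hs ⟨_, h1 v hv⟩
  have hr' := congrArg Subtype.val hr
  have hs'' := congrArg Subtype.val hs'
  have r0 := congrFun hr' 0
  have r1 := congrFun hr' 1
  have s0 := congrFun hs'' 0
  have s1 := congrFun hs'' 1
  simp [Matrix.mulVec, dotProduct, Fin.sum_univ_two] at r0 r1 s0 s1
  have hv1 : v 1 = 0 := by
    by_contra h
    have hr1 : r = 1 := by
      apply mul_right_cancel₀ h
      linear_combination r1
    rw [hr1] at r0
    exact h (by linear_combination -r0)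
  have hv0' : v 0 = 0 := by
    rw [hv1] at s1
    have : c * v 0 = 0 := by linear_combination -s1
    exact (mul_eq_zero.mp this).resolve_left hc
  apply hv0
  ext i
  fin_cases i
  · exact hv0'
  · exact hv1

/-- The explicit triples `(X₁,X₂,X₃)` and `(Y₁,Y₂,Y₃)` are irreducible: neither triple
admits a common invariant one-dimensional subspace of `k²`. -/
theorem rigid_triples_irreducible
    {k : Type*} [Field k] (hchar : ringChar k ≠ 2)
    (a b t : k) (ha0 : a ≠ 0) (hb0 : b ≠ 0) (ht0 : t ≠ 0)
    (ha1 : a ≠ 1) (ha1' : a ≠ -1) (hb1 : b ≠ 1) (hb1' : b ≠ -1)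
    (habt : a * b = t ^ 2) (hab1 : a * b ≠ 1) (hab : a ≠ b)
    (X₁ X₂ X₃ Y₁ Y₂ Y₃ : Matrix (Fin 2) (Fin 2) k)
    (hX₁ : X₁ = !![a * t, 0; (t - a) * (t - 1), t])
    (hX₂ : X₂ = !![-t, t; (t - a) * (t - 1), -t ^ 2 + t - a])
    (hX₃ : X₃ = !![1, 1; 0, 1])
    (hY₁ : Y₁ = !![a * t, 0; -((t + a) * (t + 1)), t])
    (hY₂ : Y₂ = !![-t, t; -((t + a) * (t + 1)), t ^ 2 + t + a])
    (hY₃ : Y₃ = !![1, 1; 0, 1]) :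
    (¬ ∃ L : Submodule k (Fin 2 → k), Module.finrank k L = 1 ∧
        (∀ v ∈ L, X₁.mulVec v ∈ L) ∧ (∀ v ∈ L, X₂.mulVec v ∈ L) ∧
        (∀ v ∈ L, X₃.mulVec v ∈ L)) ∧
    (¬ ∃ L : Submodule k (Fin 2 → k), Module.finrank k L = 1 ∧
        (∀ v ∈ L, Y₁.mulVec v ∈ L) ∧ (∀ v ∈ L, Y₂.mulVec v ∈ L) ∧
        (∀ v ∈ L, Y₃.mulVec v ∈ L)) := by
  subst hX₁ hX₂ hX₃ hY₁ hY₂ hY₃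
  constructor
  · rintro ⟨L, hL, h1, -, h3⟩
    refine no_invariant_line _ _ _ (mul_ne_zero ?_ ?_) L hL h1 h3
    · intro h
      apply hab
      apply mul_left_cancel₀ ha0
      linear_combination -habt - (t + a) * h
    · intro h
      apply hab1
      linear_combination habt + (t + 1) * h
  · rintro ⟨L, hL, h1, -, h3⟩
    refine no_invariant_line _ _ _ (neg_ne_zero.mpr (mul_ne_zero ?_ ?_)) L hL h1 h3
    · intro h
      apply hab
      apply mul_left_cancel₀ ha0
      linear_combination -habt - (t - a) * h
    · intro h
      apply hab1
      linear_combination habt + (t - 1) * h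
end

section
/- Let F be a finite field with q elements of odd characteristic and let a₁, a₂, b₁, b₂, c₁, c₂ ∈ Fˣ satisfy a₁ ≠ a₂, b₁ ≠ b₂, c₁ ≠ c₂, a₁a₂b₁b₂c₁c₂ = 1, and a_i b_j c_k ≠ 1 for all i, j, k ∈ {1,2}. Let C₁, C₂, C₃ be the conjugacy classes of diag(a₁,a₂), diag(b₁,b₂), diag(c₁,c₂) in GL₂(F) and C₄ the regular unipotent conjugacy class. Then the number of quadruples (S₁, S₂, S₃, S₄) ∈ C₁ × C₂ × C₃ × C₄ with S₁S₂S₃S₄ = 1 equals (q³ − q) · q(q+3). -/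
namespace GLQ

section field
variable {F : Type*} [Field F]

/-- companion matrix -/
def comp (t d : F) : Matrix (Fin 2) (Fin 2) F := !![0, -d; 1, t]

lemma isConj_of_mul {A B g : Matrix (Fin 2) (Fin 2) F} (hg : g.det ≠ 0) (h : g * A = B * g) :
    IsConj A B := by
  have hu : IsUnit g := (Matrix.isUnit_iff_isUnit_det g).2 (isUnit_iff_ne_zero.2 hg)
  obtain ⟨u, rfl⟩ := hu
  exact ⟨u, h⟩

lemma isConj_trace {A B : Matrix (Fin 2) (Fin 2) F} (h : IsConj A B) : A.trace = B.trace := by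
  obtain ⟨u, hu⟩ := h
  have : B = u * A * (u⁻¹ : (Matrix (Fin 2) (Fin 2) F)ˣ) := by
    rw [hu.eq, mul_assoc, Units.mul_inv, mul_one]
  rw [this, Matrix.trace_mul_comm, ← mul_assoc, Units.inv_mul, one_mul]

lemma isConj_det {A B : Matrix (Fin 2) (Fin 2) F} (h : IsConj A B) : A.det = B.det := by
  obtain ⟨u, hu⟩ := h
  have : B = u * A * (u⁻¹ : (Matrix (Fin 2) (Fin 2) F)ˣ) := by
    rw [hu.eq, mul_assoc, Units.mul_inv, mul_one]
  rw [this, Matrix.det_mul_comm, ← mul_assoc, Units.inv_mul, one_mul]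

lemma isConj_comp {M : Matrix (Fin 2) (Fin 2) F}
    (h : M 0 1 ≠ 0 ∨ M 1 0 ≠ 0 ∨ M 0 0 ≠ M 1 1) : IsConj (comp M.trace M.det) M := by
  by_cases h1 : M 1 0 = 0
  · by_cases h2 : M 0 1 = 0
    · have h3 : M 0 0 ≠ M 1 1 := by tauto
      apply isConj_of_mul (g := !![1, M 0 0; 1, M 1 1])
      · rw [Matrix.det_fin_two_of]
        intro h; apply h3; linear_combination -h
      · ext i j
        fin_cases i <;> fin_cases j <;>
          simp [comp, Matrix.mul_apply, Fin.sum_univ_two, Matrix.det_fin_two, Matrix.trace_fin_two, h1, h2] <;> ring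
    · apply isConj_of_mul (g := !![0, M 0 1; 1, M 1 1])
      · rw [Matrix.det_fin_two_of]
        simpa using h2
      · ext i j
        fin_cases i <;> fin_cases j <;>
          simp [comp, Matrix.mul_apply, Fin.sum_univ_two, Matrix.det_fin_two, Matrix.trace_fin_two] <;> ring
  · apply isConj_of_mul (g := !![1, M 0 0; 0, M 1 0])
    · rw [Matrix.det_fin_two_of]
      simpa using h1
    · ext i j
      fin_cases i <;> fin_cases j <;>
        simp [comp, Matrix.mul_apply, Fin.sum_univ_two, Matrix.det_fin_two, Matrix.trace_fin_two] <;> ring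

lemma isConj_diag_iff {a b : F} (hab : a ≠ b) (X : Matrix (Fin 2) (Fin 2) F) :
    IsConj (Matrix.diagonal ![a, b]) X ↔ X.trace = a + b ∧ X.det = a * b := by
  have ht : (Matrix.diagonal ![a, b]).trace = a + b := by simp [Matrix.trace_fin_two]
  have hd : (Matrix.diagonal ![a, b]).det = a * b := by simp [Matrix.det_fin_two]
  constructor
  · intro h
    rw [← isConj_trace h, ← isConj_det h]
    exact ⟨ht, hd⟩
  · rintro ⟨h1, h2⟩
    have e1 : IsConj (comp (a + b) (a * b)) (Matrix.diagonal ![a, b]) := by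
      rw [← ht, ← hd]
      exact isConj_comp (by simp [hab])
    have e2 : IsConj (comp (a + b) (a * b)) X := by
      rw [← h1, ← h2]
      apply isConj_comp
      by_contra! hc
      obtain ⟨c1, c2, c3⟩ := hc
      rw [Matrix.trace_fin_two] at h1
      rw [Matrix.det_fin_two] at h2
      apply hab
      have : (a - b) ^ 2 = 0 := by
        rw [c1, c3] at h2
        rw [c3] at h1
        linear_combination (-(a + b) - 2 * X 1 1) * h1 + 4 * h2
      exact sub_eq_zero.1 (pow_eq_zero_iff (two_ne_zero) |>.1 this)
    exact e1.symm.trans e2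

lemma isConj_unip_iff (X : Matrix (Fin 2) (Fin 2) F) :
    IsConj (!![1, 1; 0, 1] : Matrix (Fin 2) (Fin 2) F) X ↔
      X.trace = 2 ∧ X.det = 1 ∧ X ≠ 1 := by
  have ht : (!![1, 1; 0, 1] : Matrix (Fin 2) (Fin 2) F).trace = 2 := by
    simp [Matrix.trace_fin_two]; norm_num
  have hd : (!![1, 1; 0, 1] : Matrix (Fin 2) (Fin 2) F).det = 1 := by simp [Matrix.det_fin_two]
  constructor
  · intro h
    rw [← isConj_trace h, ← isConj_det h]
    refine ⟨ht, hd, ?_⟩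
    rintro rfl
    rw [isConj_comm, isConj_one_right] at h
    have := congrFun (congrFun h 0) 1
    simp at this
  · rintro ⟨h1, h2, h3⟩
    have e1 : IsConj (comp 2 1) (!![1, 1; 0, 1] : Matrix (Fin 2) (Fin 2) F) := by
      have := isConj_comp (M := (!![1, 1; 0, 1] : Matrix (Fin 2) (Fin 2) F)) (by simp)
      rwa [ht, hd] at this
    have e2 : IsConj (comp 2 1) X := by
      rw [← h1, ← h2]
      apply isConj_comp
      by_contra! hc
      obtain ⟨c1, c2, c3⟩ := hc
      rw [Matrix.trace_fin_two] at h1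
      rw [Matrix.det_fin_two] at h2
      apply h3
      have : (X 1 1 - 1) ^ 2 = 0 := by
        rw [c1, c3] at h2
        rw [c3] at h1
        linear_combination h2 - h1
      have h11 : X 1 1 = 1 := sub_eq_zero.1 (pow_eq_zero_iff (two_ne_zero) |>.1 this)
      ext i j
      fin_cases i <;> fin_cases j <;> simp [c1, c2, c3, h11]
    exact e1.symm.trans e2

end field

section fin
variable {F : Type*} [Field F] [Fintype F] [DecidableEq F]

lemma sum_matrix (φ : Matrix (Fin 2) (Fin 2) F → ℤ) :
    ∑ X, φ X = ∑ x, ∑ y, ∑ z, ∑ w, φ !![x, y; z, w] := by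
  have : ∑ X, φ X = ∑ p : F × F × F × F, φ !![p.1, p.2.1; p.2.2.1, p.2.2.2] := by
    symm
    apply Fintype.sum_bijective (fun p : F × F × F × F => !![p.1, p.2.1; p.2.2.1, p.2.2.2])
    · constructor
      · rintro ⟨x, y, z, w⟩ ⟨x', y', z', w'⟩ h
        have h1 := congrFun (congrFun h 0) 0
        have h2 := congrFun (congrFun h 0) 1
        have h3 := congrFun (congrFun h 1) 0
        have h4 := congrFun (congrFun h 1) 1
        simp at h1 h2 h3 h4
        simp [*]
      · intro X
        exact ⟨(X 0 0, X 0 1, X 1 0, X 1 1), (Matrix.eta_fin_two X).symm⟩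
    · intro p; rfl
  rw [this]
  simp only [Fintype.sum_prod_type]

lemma sum_mul_eq (k : F) : ∑ r : F, ∑ s : F, (if r * s = k then (1 : ℤ) else 0) =
    (Fintype.card F : ℤ) - 1 + if k = 0 then (Fintype.card F : ℤ) else 0 := by
  have h : ∀ r : F, ∑ s : F, (if r * s = k then (1 : ℤ) else 0) =
      1 + if r = 0 then (if k = 0 then (Fintype.card F : ℤ) else 0) - 1 else 0 := by
    intro r
    by_cases hr : r = 0
    · subst hr
      by_cases hk : k = 0
      · simp [hk]
      · simp [hk, Ne.symm hk]
    · rw [Finset.sum_eq_single (k / r)]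
      · simp [hr, mul_div_cancel₀]
      · intro s _ hs
        rw [if_neg]
        intro h; apply hs; rw [← h]; field_simp
      · simp
  simp only [h, Finset.sum_add_distrib]
  simp
  ring

lemma sum_two {b₁ b₂ : F} (hb : b₁ ≠ b₂) (p : F → Prop) [DecidablePred p]
    (hp : ∀ x, p x ↔ x = b₁ ∨ x = b₂) (c : ℤ) :
    ∑ x, (if p x then c else 0) = 2 * c := by
  have : ∀ x, (if p x then c else 0) = (if x = b₁ then c else 0) + (if x = b₂ then c else 0) := by
    intro x
    by_cases h1 : x = b₁
    · have : p x := (hp x).2 (Or.inl h1)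
      have h2 : x ≠ b₂ := by rw [h1]; exact hb
      simp [*]
    · simp [hp, h1]
  simp only [this, Finset.sum_add_distrib]
  simp
  ring

lemma class_card {c₁ c₂ : F} (hc : c₁ ≠ c₂) :
    ∑ X : Matrix (Fin 2) (Fin 2) F,
      (if X.trace = c₁ + c₂ ∧ X.det = c₁ * c₂ then (1 : ℤ) else 0) =
      (Fintype.card F : ℤ) ^ 2 + Fintype.card F := by
  rw [sum_matrix]
  have h : ∀ x y z : F, ∑ w, (if (!![x, y; z, w]).trace = c₁ + c₂ ∧
      (!![x, y; z, w]).det = c₁ * c₂ then (1 : ℤ) else 0) =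
      if y * z = x * (c₁ + c₂ - x) - c₁ * c₂ then 1 else 0 := by
    intro x y z
    rw [Finset.sum_eq_single (c₁ + c₂ - x)]
    · simp only [Matrix.trace_fin_two_of, Matrix.det_fin_two_of]
      congr 1
      apply propext
      constructor
      · rintro ⟨-, h⟩; linear_combination -h
      · intro h; exact ⟨by ring, by linear_combination -h⟩
    · intro w _ hw
      rw [if_neg]
      rintro ⟨h, -⟩
      rw [Matrix.trace_fin_two_of] at h
      apply hw; linear_combination h
    · simp
  simp only [h, sum_mul_eq, Finset.sum_add_distrib]
  rw [sum_two hc]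
  · simp; ring
  · intro x
    rw [← sub_eq_zero (b := c₁), ← sub_eq_zero (b := c₂), ← mul_eq_zero]
    constructor <;> intro h <;> linear_combination -h

/-- the number of `X` with given trace, determinant and trace of `X * P` -/
def cnt (t d γ : F) (P : Matrix (Fin 2) (Fin 2) F) : ℤ :=
  ∑ X : Matrix (Fin 2) (Fin 2) F,
    if X.trace = t ∧ X.det = d ∧ (X * P).trace = γ then (1 : ℤ) else 0

/-- conjugation as an equivalence -/
def conjE (u : (Matrix (Fin 2) (Fin 2) F)ˣ) :
    Matrix (Fin 2) (Fin 2) F ≃ Matrix (Fin 2) (Fin 2) F where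
  toFun X := u * X * (u⁻¹ : (Matrix (Fin 2) (Fin 2) F)ˣ)
  invFun X := (u⁻¹ : (Matrix (Fin 2) (Fin 2) F)ˣ) * X * u
  left_inv X := by simp [mul_assoc]
  right_inv X := by simp [mul_assoc]

lemma conjE_conj (u : (Matrix (Fin 2) (Fin 2) F)ˣ) (X : Matrix (Fin 2) (Fin 2) F) :
    IsConj X (conjE u X) := ⟨u, by simp [SemiconjBy, conjE, mul_assoc]⟩

lemma conjE_mul (u : (Matrix (Fin 2) (Fin 2) F)ˣ) (X Y : Matrix (Fin 2) (Fin 2) F) :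
    conjE u (X * Y) = conjE u X * conjE u Y := by simp [conjE, mul_assoc]

lemma exists_conjE {P Q : Matrix (Fin 2) (Fin 2) F} (h : IsConj P Q) : ∃ u, Q = conjE u P := by
  obtain ⟨u, hu⟩ := h
  refine ⟨u, ?_⟩
  change Q = u * P * (u⁻¹ : (Matrix (Fin 2) (Fin 2) F)ˣ)
  rw [hu.eq, mul_assoc, Units.mul_inv, mul_one]

lemma cnt_conj (t d γ : F) {P Q : Matrix (Fin 2) (Fin 2) F} (h : IsConj P Q) :
    cnt t d γ P = cnt t d γ Q := by
  obtain ⟨u, rfl⟩ := exists_conjE h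
  unfold cnt
  apply Fintype.sum_equiv (conjE u)
  intro X
  rw [← conjE_mul, ← isConj_trace (conjE_conj u X), ← isConj_trace (conjE_conj u (X * P)),
    ← isConj_det (conjE_conj u X)]

lemma cnt_comp (t d γ D τ : F) : cnt t d γ (comp τ D) =
    ∑ z, ∑ w, if (t - w) * w - z * (γ + z * D - w * τ) = d then (1 : ℤ) else 0 := by
  unfold cnt
  rw [sum_matrix]
  have e : ∀ x y z w : F, (!![x, y; z, w] * comp τ D).trace = y - z * D + w * τ := by
    intro x y z w
    simp [comp, Matrix.trace_fin_two]; ring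
  simp only [e, Matrix.trace_fin_two_of, Matrix.det_fin_two_of]
  have : ∀ x : F, ∑ y : F, ∑ z : F, ∑ w : F, (if x + w = t ∧ x * w - y * z = d ∧
      y - z * D + w * τ = γ then (1 : ℤ) else 0) = ∑ z : F, ∑ w : F, ∑ y : F, (if x + w = t ∧ x * w - y * z = d ∧
      y - z * D + w * τ = γ then (1 : ℤ) else 0) := by
    intro x
    rw [Finset.sum_comm]
    refine Finset.sum_congr rfl fun z _ => ?_
    rw [Finset.sum_comm]
  simp only [this]
  rw [Finset.sum_comm]
  refine Finset.sum_congr rfl fun z _ => ?_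
  rw [Finset.sum_comm]
  refine Finset.sum_congr rfl fun w _ => ?_
  rw [Finset.sum_eq_single (t - w)]
  · rw [Finset.sum_eq_single (γ + z * D - w * τ)]
    · congr 1
      apply propext
      constructor
      · rintro ⟨-, h, -⟩; linear_combination h
      · intro h; exact ⟨by ring, by linear_combination h, by ring⟩
    · intro y _ hy
      rw [if_neg]
      rintro ⟨-, -, h⟩
      apply hy; linear_combination h
    · simp
  · intro x _ hx
    apply Finset.sum_eq_zero
    intro y _
    rw [if_neg]
    rintro ⟨h, -⟩
    apply hx; linear_combination h
  · simp

lemma sum_cnt_comp {b₁ b₂ α₁ α₂ D : F} (hb : b₁ ≠ b₂) (hα : α₁ ≠ α₂) (hb1 : b₁ ≠ 0)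
    (hb2 : b₂ ≠ 0) (hα1 : α₁ ≠ 0) (hα2 : α₂ ≠ 0) (hD : D ≠ 0) (h : b₁ * b₂ * D = α₁ * α₂) :
    ∑ τ, cnt (b₁ + b₂) (b₁ * b₂) (α₁ + α₂) (comp τ D) = ((Fintype.card F : ℤ) + 1) ^ 2 := by
  simp only [cnt_comp]
  rw [Finset.sum_comm]
  have key : ∀ z w : F, ∑ τ : F, (if (b₁ + b₂ - w) * w - z * (α₁ + α₂ + z * D - w * τ) = b₁ * b₂
      then (1 : ℤ) else 0) = (1 - if z = 0 then 1 else 0) * (1 - if w = 0 then 1 else 0)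
      + (if z = 0 then 1 else 0) * (if (w - b₁) * (w - b₂) = 0 then (Fintype.card F : ℤ) else 0)
      + (if w = 0 then 1 else 0) * (if (D * z + α₁) * (D * z + α₂) = 0 then (Fintype.card F : ℤ) else 0) := by
    intro z w
    by_cases hz : z = 0
    · have e : ((b₁ + b₂ - w) * w = b₁ * b₂) ↔ (w - b₁) * (w - b₂) = 0 := by
        constructor <;> intro h <;> linear_combination -h
      subst hz
      simp only [zero_mul, sub_zero, e]
      simp [hα1, hα2]
    · by_cases hw : w = 0
      · subst hw
        have e : ((b₁ + b₂ - 0) * 0 - z * (α₁ + α₂ + z * D) = b₁ * b₂) ↔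
            (D * z + α₁) * (D * z + α₂) = 0 := by
          constructor
          · intro h'; linear_combination -D * h' - h
          · intro h'
            apply mul_left_cancel₀ hD
            linear_combination -h' - h
        simp only [zero_mul, sub_zero] at e ⊢
        simp only [e]
        simp [hz]
      · rw [Finset.sum_eq_single ((b₁ * b₂ - (b₁ + b₂ - w) * w + z * (α₁ + α₂ + z * D)) / (z * w))]
        · rw [if_pos]
          · simp [hz, hw]
          · field_simp; ring
        · intro τ _ hτ
          rw [if_neg]
          intro h
          apply hτ
          field_simp
          linear_combination h
        · simp
  have : ∀ z : F, ∑ τ : F, ∑ w : F, (if (b₁ + b₂ - w) * w - z * (α₁ + α₂ + z * D - w * τ) = b₁ * b₂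
      then (1 : ℤ) else 0) = ∑ w : F, ∑ τ : F, (if (b₁ + b₂ - w) * w - z * (α₁ + α₂ + z * D - w * τ) = b₁ * b₂
      then (1 : ℤ) else 0) := fun z => Finset.sum_comm
  simp only [this, key, Finset.sum_add_distrib, ← Finset.mul_sum, ← Finset.sum_mul]
  have hne : -α₁ / D ≠ -α₂ / D := by
    intro h; apply hα; field_simp at h; simpa using h
  rw [sum_two hb (fun w => (w - b₁) * (w - b₂) = 0),
    sum_two (b₁ := -α₁ / D) (b₂ := -α₂ / D) hne (fun z => (D * z + α₁) * (D * z + α₂) = 0)]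
  · simp; ring
  · intro x
    rw [mul_eq_zero]
    apply or_congr
    · constructor
      · intro h; field_simp; linear_combination h
      · rintro rfl; field_simp; ring
    · constructor
      · intro h; field_simp; linear_combination h
      · rintro rfl; field_simp; ring
  · intro x
    rw [mul_eq_zero, sub_eq_zero, sub_eq_zero]

lemma cnt_diag {b₁ b₂ α₁ α₂ c₁ c₂ : F} (hc : c₁ ≠ c₂)
    (h : b₁ * b₂ * (c₁ * c₂) = α₁ * α₂)
    (h11 : b₁ * c₁ ≠ α₁) (h12 : b₁ * c₁ ≠ α₂) (h21 : b₂ * c₁ ≠ α₁) (h22 : b₂ * c₁ ≠ α₂) :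
    cnt (b₁ + b₂) (b₁ * b₂) (α₁ + α₂) (Matrix.diagonal ![c₁, c₂]) = (Fintype.card F : ℤ) - 1 := by
  unfold cnt
  rw [sum_matrix]
  have e : ∀ x y z w : F, (!![x, y; z, w] * Matrix.diagonal ![c₁, c₂]).trace = x * c₁ + w * c₂ := by
    intro x y z w
    rw [Matrix.trace_fin_two, Matrix.mul_diagonal, Matrix.mul_diagonal]
    simp
  simp only [e, Matrix.trace_fin_two_of, Matrix.det_fin_two_of]
  have hs : c₁ - c₂ ≠ 0 := sub_ne_zero.2 hc
  obtain ⟨x₀, hx₀⟩ : ∃ x₀, x₀ * (c₁ - c₂) = α₁ + α₂ - (b₁ + b₂) * c₂ := ⟨_, div_mul_cancel₀ _ hs⟩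
  rw [Finset.sum_eq_single x₀]
  · have h1 : ∀ y z : F, ∑ w, (if x₀ + w = b₁ + b₂ ∧ x₀ * w - y * z = b₁ * b₂ ∧
        x₀ * c₁ + w * c₂ = α₁ + α₂ then (1 : ℤ) else 0) =
        if y * z = x₀ * (b₁ + b₂ - x₀) - b₁ * b₂ then 1 else 0 := by
      intro y z
      rw [Finset.sum_eq_single (b₁ + b₂ - x₀)]
      · congr 1
        apply propext
        constructor
        · rintro ⟨-, h, -⟩; linear_combination -h
        · intro h; exact ⟨by ring, by linear_combination -h, by linear_combination hx₀⟩
      · intro w _ hw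
        rw [if_neg]
        rintro ⟨h, -⟩
        apply hw; linear_combination h
      · simp
    simp only [h1]
    rw [sum_mul_eq, if_neg, add_zero]
    intro h0
    have h2 : (x₀ - b₁) * (x₀ - b₂) = 0 := by linear_combination -h0
    rcases mul_eq_zero.1 h2 with h3 | h3
    · have h4 : x₀ = b₁ := sub_eq_zero.1 h3
      rw [h4] at hx₀
      have : (b₁ * c₁ - α₁) * (b₁ * c₁ - α₂) = 0 := by
        linear_combination b₁ * c₁ * hx₀ - h
      rcases mul_eq_zero.1 this with h5 | h5
      · exact h11 (sub_eq_zero.1 h5)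
      · exact h12 (sub_eq_zero.1 h5)
    · have h4 : x₀ = b₂ := sub_eq_zero.1 h3
      rw [h4] at hx₀
      have : (b₂ * c₁ - α₁) * (b₂ * c₁ - α₂) = 0 := by
        linear_combination b₂ * c₁ * hx₀ - h
      rcases mul_eq_zero.1 this with h5 | h5
      · exact h21 (sub_eq_zero.1 h5)
      · exact h22 (sub_eq_zero.1 h5)
  · intro x _ hx
    refine Finset.sum_eq_zero fun y _ => Finset.sum_eq_zero fun z _ => Finset.sum_eq_zero fun w _ => ?_
    rw [if_neg]
    rintro ⟨h1, -, h2⟩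
    apply hx
    apply mul_right_cancel₀ hs
    linear_combination h2 - c₂ * h1 - hx₀
  · simp

/-- weighted sum over the unipotent class -/
lemma sum_unip {c₁ c₂ : F} (hc : c₁ ≠ c₂) (f : F → ℤ) :
    ∑ X : Matrix (Fin 2) (Fin 2) F, (if X.trace = 2 ∧ X.det = 1 ∧ X ≠ 1 then
      f (Matrix.diagonal ![c₁, c₂] * X).trace else 0) =
    ((Fintype.card F : ℤ) - 1) * (∑ τ, f τ + f (c₁ + c₂)) := by
  rw [sum_matrix]
  have hs : c₁ - c₂ ≠ 0 := sub_ne_zero.2 hc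
  have e : ∀ x y z w : F, (Matrix.diagonal ![c₁, c₂] * !![x, y; z, w]).trace = c₁ * x + c₂ * w := by
    intro x y z w
    simp [Matrix.trace_fin_two]
  have e1 : ∀ x y z w : F, !![x, y; z, w] = 1 ↔ x = 1 ∧ y = 0 ∧ z = 0 ∧ w = 1 := by
    intro x y z w
    rw [Matrix.one_fin_two]
    simp [← Matrix.ext_iff, Fin.forall_fin_two, and_assoc]
  simp only [e, Matrix.trace_fin_two_of, Matrix.det_fin_two_of, ne_eq, e1]
  have h1 : ∀ x y z : F, ∑ w, (if x + w = 2 ∧ x * w - y * z = 1 ∧ ¬ (x = 1 ∧ y = 0 ∧ z = 0 ∧ w = 1)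
      then f (c₁ * x + c₂ * w) else 0) = f (c₁ * x + c₂ * (2 - x)) *
        ((if y * z = x * (2 - x) - 1 then 1 else 0) -
          if x = 1 then if y = 0 then if z = 0 then 1 else 0 else 0 else 0) := by
    intro x y z
    rw [Finset.sum_eq_single (2 - x)]
    · have e2 : x * (2 - x) - y * z = 1 ↔ y * z = x * (2 - x) - 1 := by
        constructor <;> intro h <;> linear_combination -h
      simp only [e2]
      by_cases hx : x = 1
      · subst hx
        by_cases hy : y = 0
        · by_cases hz : z = 0
          · simp [hy, hz]; norm_num
          · simp [hy, hz]
        · simp [hy]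
      · simp [hx]
    · intro w _ hw
      rw [if_neg]
      rintro ⟨h, -⟩
      apply hw; linear_combination h
    · simp
  simp only [h1, ← Finset.mul_sum, Finset.sum_sub_distrib, sum_mul_eq]
  have h2 : ∀ x : F, f (c₁ * x + c₂ * (2 - x)) * ((Fintype.card F : ℤ) - 1 +
      (if x * (2 - x) - 1 = 0 then (Fintype.card F : ℤ) else 0) -
      ∑ y : F, ∑ z : F, (if x = 1 then if y = 0 then if z = 0 then (1 : ℤ) else 0 else 0 else 0)) =
      ((Fintype.card F : ℤ) - 1) * f (c₁ * x + c₂ * (2 - x)) +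
        if x = 1 then ((Fintype.card F : ℤ) - 1) * f (c₁ + c₂) else 0 := by
    intro x
    by_cases hx : x = 1
    · subst hx
      have : (1 : F) * (2 - 1) - 1 = 0 := by ring
      have h' : c₁ * 1 + c₂ * (2 - 1) = c₁ + c₂ := by ring
      rw [if_pos this, h']
      simp
      ring
    · have : x * (2 - x) - 1 ≠ 0 := by
        intro h
        apply hx
        have : (x - 1) ^ 2 = 0 := by linear_combination -h
        exact sub_eq_zero.1 (pow_eq_zero_iff (two_ne_zero) |>.1 this)
      simp [hx, this]
      ring
  simp only [h2, Finset.sum_add_distrib, ← Finset.mul_sum]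
  have h3 : ∑ x, f (c₁ * x + c₂ * (2 - x)) = ∑ τ, f τ := by
    apply Fintype.sum_bijective (fun x => c₁ * x + c₂ * (2 - x))
    · constructor
      · intro x y h
        apply mul_left_cancel₀ hs
        simp only at h
        linear_combination h
      · intro t
        refine ⟨(t - 2 * c₂) / (c₁ - c₂), ?_⟩
        simp only
        field_simp
        ring
    · intro x; rfl
  rw [h3]
  simp
  ring

lemma nonscalar {c₁ c₂ : F} (hc : c₁ ≠ c₂) {X : Matrix (Fin 2) (Fin 2) F} (ht : X.trace = 2)
    (hd : X.det = 1) (hc1 : c₁ ≠ 0) (hc2 : c₂ ≠ 0) :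
    (Matrix.diagonal ![c₁, c₂] * X) 0 1 ≠ 0 ∨ (Matrix.diagonal ![c₁, c₂] * X) 1 0 ≠ 0 ∨
      (Matrix.diagonal ![c₁, c₂] * X) 0 0 ≠ (Matrix.diagonal ![c₁, c₂] * X) 1 1 := by
  by_contra! h
  simp [hc1, hc2] at h
  obtain ⟨h1, h2, h3⟩ := h
  rw [Matrix.trace_fin_two] at ht
  rw [Matrix.det_fin_two, h1] at hd
  have : (X 1 1 - 1) ^ 2 = 0 := by linear_combination X 1 1 * ht - hd
  have h11 : X 1 1 = 1 := sub_eq_zero.1 (pow_eq_zero_iff (two_ne_zero) |>.1 this)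
  have h00 : X 0 0 = 1 := by rw [h11] at ht; linear_combination ht
  rw [h11, h00] at h3
  apply hc; simpa using h3

/-- contribution of a fixed third matrix -/
def inner (t d γ : F) (S : Matrix (Fin 2) (Fin 2) F) : ℤ :=
  ∑ X : Matrix (Fin 2) (Fin 2) F, if X.trace = 2 ∧ X.det = 1 ∧ X ≠ 1 then cnt t d γ (S * X) else 0

lemma inner_conj (t d γ : F) {P Q : Matrix (Fin 2) (Fin 2) F} (h : IsConj P Q) :
    inner t d γ P = inner t d γ Q := by
  obtain ⟨u, rfl⟩ := exists_conjE h
  unfold inner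
  apply Fintype.sum_equiv (conjE u)
  intro X
  have h1 : conjE u X = 1 ↔ X = 1 := by
    have : conjE u (1 : Matrix (Fin 2) (Fin 2) F) = 1 := by simp [conjE]
    rw [← this, (conjE u).apply_eq_iff_eq, this]
  rw [← conjE_mul, ← isConj_trace (conjE_conj u X), ← cnt_conj _ _ _ (conjE_conj u (P * X)),
    ← isConj_det (conjE_conj u X)]
  simp only [ne_eq, h1]

lemma inner_diag {b₁ b₂ α₁ α₂ c₁ c₂ : F} (hc : c₁ ≠ c₂) (hc1 : c₁ ≠ 0) (hc2 : c₂ ≠ 0)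
    (hb : b₁ ≠ b₂) (hα : α₁ ≠ α₂) (hb1 : b₁ ≠ 0)
    (hb2 : b₂ ≠ 0) (hα1 : α₁ ≠ 0) (hα2 : α₂ ≠ 0)
    (h : b₁ * b₂ * (c₁ * c₂) = α₁ * α₂)
    (h11 : b₁ * c₁ ≠ α₁) (h12 : b₁ * c₁ ≠ α₂) (h21 : b₂ * c₁ ≠ α₁) (h22 : b₂ * c₁ ≠ α₂) :
    inner (b₁ + b₂) (b₁ * b₂) (α₁ + α₂) (Matrix.diagonal ![c₁, c₂]) =
      ((Fintype.card F : ℤ) - 1) * ((Fintype.card F : ℤ) ^ 2 + 3 * Fintype.card F) := by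
  have hdd : (Matrix.diagonal ![c₁, c₂]).det = c₁ * c₂ := by simp [Matrix.det_fin_two]
  have e : inner (b₁ + b₂) (b₁ * b₂) (α₁ + α₂) (Matrix.diagonal ![c₁, c₂]) =
      ∑ X : Matrix (Fin 2) (Fin 2) F, (if X.trace = 2 ∧ X.det = 1 ∧ X ≠ 1 then
      (fun τ => cnt (b₁ + b₂) (b₁ * b₂) (α₁ + α₂) (comp τ (c₁ * c₂)))
        (Matrix.diagonal ![c₁, c₂] * X).trace else 0) := by
    unfold inner
    refine Finset.sum_congr rfl fun X _ => ?_
    split_ifs with hX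
    · rw [← cnt_conj _ _ _ (isConj_comp (nonscalar hc hX.1 hX.2.1 hc1 hc2)), Matrix.det_mul, hdd,
        hX.2.1, mul_one]
    · rfl
  rw [e, sum_unip hc (fun τ => cnt (b₁ + b₂) (b₁ * b₂) (α₁ + α₂) (comp τ (c₁ * c₂))),
    sum_cnt_comp hb hα hb1 hb2 hα1 hα2 (mul_ne_zero hc1 hc2) h]
  have : cnt (b₁ + b₂) (b₁ * b₂) (α₁ + α₂) (comp (c₁ + c₂) (c₁ * c₂)) = (Fintype.card F : ℤ) - 1 := by
    rw [← cnt_diag hc h h11 h12 h21 h22]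
    apply cnt_conj
    have := isConj_comp (M := Matrix.diagonal ![c₁, c₂]) (by simp [hc])
    rw [hdd] at this
    simpa [Matrix.trace_fin_two] using this
  rw [this]
  ring

lemma sum_first {a₁ a₂ : F} (h1 : a₁ ≠ 0) (h2 : a₂ ≠ 0) {Y : Matrix (Fin 2) (Fin 2) F}
    (hY : a₁ * a₂ * Y.det = 1) :
    ∑ X : Matrix (Fin 2) (Fin 2) F, (if (X.trace = a₁ + a₂ ∧ X.det = a₁ * a₂) ∧ X * Y = 1
      then (1 : ℤ) else 0) = if Y.trace = a₁⁻¹ + a₂⁻¹ then 1 else 0 := by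
  have hZ : ((a₁ * a₂) • Y.adjugate) * Y = 1 := by
    rw [Matrix.smul_mul, Matrix.adjugate_mul, smul_smul, hY, one_smul]
  rw [Finset.sum_eq_single ((a₁ * a₂) • Y.adjugate)]
  · congr 1
    apply propext
    have htr : ((a₁ * a₂) • Y.adjugate).trace = a₁ * a₂ * Y.trace := by
      simp [Matrix.adjugate_fin_two, Matrix.trace_fin_two]; ring
    have hdt : ((a₁ * a₂) • Y.adjugate).det = a₁ * a₂ := by
      have := congrArg Matrix.det hZ
      rw [Matrix.det_mul, Matrix.det_one] at this
      have hd : Y.det ≠ 0 := right_ne_zero_of_mul (hY ▸ one_ne_zero)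
      apply mul_right_cancel₀ hd
      rw [this, hY]
    simp only [hZ, hdt, htr, and_true]
    constructor
    · intro h; field_simp; linear_combination h
    · intro h; rw [h]; field_simp; ring
  · intro X _ hX
    rw [if_neg]
    rintro ⟨-, h⟩
    apply hX
    calc X = X * (Y * ((a₁ * a₂) • Y.adjugate)) := by rw [mul_eq_one_comm.1 hZ, mul_one]
      _ = _ := by rw [← mul_assoc, h, one_mul]
  · simp

end fin

end GLQ

/-- Genus 0, four punctures, `GL₂`, three generic regular semisimple classes and one regular
unipotent class: the number of quadruples `(S₁,S₂,S₃,S₄) ∈ C₁ × C₂ × C₃ × C₄` with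
`S₁S₂S₃S₄ = 1` is `(q³−q)·q(q+3)`. -/
theorem GL2_quadruple_count_three_ss_one_unipotent
    {F : Type*} [Field F] [Fintype F] (hchar : ringChar F ≠ 2)
    (q : ℕ) (hq : q = Fintype.card F)
    (a₁ a₂ b₁ b₂ c₁ c₂ : F)
    (ha0 : a₁ ≠ 0) (ha0' : a₂ ≠ 0) (hb0 : b₁ ≠ 0) (hb0' : b₂ ≠ 0)
    (hc0 : c₁ ≠ 0) (hc0' : c₂ ≠ 0)
    (ha : a₁ ≠ a₂) (hb : b₁ ≠ b₂) (hc : c₁ ≠ c₂)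
    (hprod : a₁ * a₂ * b₁ * b₂ * c₁ * c₂ = 1)
    (hgen : ∀ i j l : Fin 2, ![a₁, a₂] i * ![b₁, b₂] j * ![c₁, c₂] l ≠ 1) :
    (Nat.card {x : Matrix (Fin 2) (Fin 2) F × Matrix (Fin 2) (Fin 2) F ×
        Matrix (Fin 2) (Fin 2) F × Matrix (Fin 2) (Fin 2) F //
        IsConj (Matrix.diagonal ![a₁, a₂]) x.1 ∧
        IsConj (Matrix.diagonal ![b₁, b₂]) x.2.1 ∧
        IsConj (Matrix.diagonal ![c₁, c₂]) x.2.2.1 ∧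
        IsConj (!![1, 1; 0, 1] : Matrix (Fin 2) (Fin 2) F) x.2.2.2 ∧
        x.1 * x.2.1 * x.2.2.1 * x.2.2.2 = 1} : ℤ) =
      ((q : ℤ) ^ 3 - q) * ((q : ℤ) * ((q : ℤ) + 3)) := by
  classical
  subst hq
  have ha1 := inv_ne_zero ha0
  have ha2 := inv_ne_zero ha0'
  have hg : ∀ i j l : Fin 2, ![b₁, b₂] j * ![c₁, c₂] l ≠ (![a₁, a₂] i)⁻¹ := by
    intro i j l h
    have hne : ![a₁, a₂] i ≠ 0 := by fin_cases i <;> simp [ha0, ha0']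
    apply hgen i j l
    rw [mul_assoc, h, mul_inv_cancel₀ hne]
  have hin := GLQ.inner_diag (b₁ := b₁) (b₂ := b₂) (α₁ := a₁⁻¹) (α₂ := a₂⁻¹) hc hc0 hc0' hb
    (fun h => ha (inv_injective h)) hb0 hb0' ha1 ha2
    (by field_simp; linear_combination hprod) (by simpa using hg 0 0 0) (by simpa using hg 1 0 0)
    (by simpa using hg 0 1 0) (by simpa using hg 1 1 0)
  have step : ∀ S₂ S₃ S₄ : Matrix (Fin 2) (Fin 2) F,
      ∑ S₁ : Matrix (Fin 2) (Fin 2) F, (if (S₁.trace = a₁ + a₂ ∧ S₁.det = a₁ * a₂) ∧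
        (S₂.trace = b₁ + b₂ ∧ S₂.det = b₁ * b₂) ∧ (S₃.trace = c₁ + c₂ ∧ S₃.det = c₁ * c₂) ∧
        (S₄.trace = 2 ∧ S₄.det = 1 ∧ S₄ ≠ 1) ∧ S₁ * S₂ * S₃ * S₄ = 1 then (1 : ℤ) else 0) =
      if S₃.trace = c₁ + c₂ ∧ S₃.det = c₁ * c₂ then
        (if S₄.trace = 2 ∧ S₄.det = 1 ∧ S₄ ≠ 1 then
          (if S₂.trace = b₁ + b₂ ∧ S₂.det = b₁ * b₂ ∧ (S₂ * (S₃ * S₄)).trace = a₁⁻¹ + a₂⁻¹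
            then 1 else 0) else 0) else 0 := by
    intro S₂ S₃ S₄
    by_cases h3 : S₃.trace = c₁ + c₂ ∧ S₃.det = c₁ * c₂
    · by_cases h4 : S₄.trace = 2 ∧ S₄.det = 1 ∧ S₄ ≠ 1
      · by_cases h2 : S₂.trace = b₁ + b₂ ∧ S₂.det = b₁ * b₂
        · have hdet : a₁ * a₂ * (S₂ * (S₃ * S₄)).det = 1 := by
            rw [Matrix.det_mul, Matrix.det_mul, h2.2, h3.2, h4.2.1]
            linear_combination hprod
          have := GLQ.sum_first ha0 ha0' hdet
          rw [if_pos h3, if_pos h4]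
          simp only [h2, true_and]
          rw [← this]
          refine Finset.sum_congr rfl fun S₁ _ => ?_
          congr 1
          simp only [h3, h4, mul_assoc, true_and, and_true, ne_eq, not_false_eq_true]
        · rw [if_pos h3, if_pos h4, if_neg (fun h => h2 ⟨h.1, h.2.1⟩)]
          exact Finset.sum_eq_zero fun S₁ _ => if_neg (fun h => h2 h.2.1)
      · rw [if_pos h3, if_neg h4]
        exact Finset.sum_eq_zero fun S₁ _ => if_neg (fun h => h4 h.2.2.2.1)
    · rw [if_neg h3]
      exact Finset.sum_eq_zero fun S₁ _ => if_neg (fun h => h3 h.2.2.1)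
  simp only [GLQ.isConj_diag_iff ha, GLQ.isConj_diag_iff hb, GLQ.isConj_diag_iff hc,
    GLQ.isConj_unip_iff]
  rw [Nat.card_eq_fintype_card, Fintype.card_subtype, Finset.card_filter]
  push_cast
  rw [Fintype.sum_prod_type, Finset.sum_comm, Fintype.sum_prod_type]
  simp only [step]
  rw [Finset.sum_comm, Fintype.sum_prod_type]
  have last : ∀ S₃ : Matrix (Fin 2) (Fin 2) F, ∑ S₄ : Matrix (Fin 2) (Fin 2) F,
      ∑ S₂ : Matrix (Fin 2) (Fin 2) F, (if S₃.trace = c₁ + c₂ ∧ S₃.det = c₁ * c₂ then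
        (if S₄.trace = 2 ∧ S₄.det = 1 ∧ S₄ ≠ 1 then
          (if S₂.trace = b₁ + b₂ ∧ S₂.det = b₁ * b₂ ∧ (S₂ * (S₃ * S₄)).trace = a₁⁻¹ + a₂⁻¹
            then (1 : ℤ) else 0) else 0) else 0) =
      (if S₃.trace = c₁ + c₂ ∧ S₃.det = c₁ * c₂ then 1 else 0) *
        (((Fintype.card F : ℤ) - 1) * ((Fintype.card F : ℤ) ^ 2 + 3 * Fintype.card F)) := by
    intro S₃
    by_cases h3 : S₃.trace = c₁ + c₂ ∧ S₃.det = c₁ * c₂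
    · simp only [if_pos h3]
      rw [← hin, GLQ.inner_conj _ _ _ ((GLQ.isConj_diag_iff hc S₃).2 h3), one_mul]
      unfold GLQ.inner GLQ.cnt
      refine Finset.sum_congr rfl fun S₄ _ => ?_
      split_ifs with h4
      · rfl
      · simp
    · simp [if_neg h3]
  simp only [last]
  rw [← Finset.sum_mul, GLQ.class_card hc]
  ring
end
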